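/- arXiv:1003.0860 — 3 statements merged into one kernel-verified Lean document; each statement's English description precedes it below -/
import Mathlib

section
/- Addition theorem for spherical harmonics: for all ξ, η ∈ Sⁿ and k ∈ ℕ₀, one has C_k^{(n-1)/2}(ξᵀη) / C_k^{(n-1)/2}(1) = (|Sⁿ| / d_k(n)) · Σ_{i=1}^{d_k(n)} Y_k^i(ξ) · conj(Y_k^i(η)), where {Y_k^i} is any orthonormal basis of the space of degree-k spherical harmonics on Sⁿ. -/
open MeasureTheory
open scoped RealInnerProductSpace

noncomputable section

/-- The Gegenbauer polynomials `C_k^λ`, defined by the standard recurrence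
`C₀ = 1`, `C₁ = 2λ X`, `(k+2) C_{k+2} = 2(k+1+λ) X C_{k+1} − (k+2λ) C_k`. -/
def gegenbauer (lam : ℝ) : ℕ → Polynomial ℝ
  | 0 => 1
  | 1 => Polynomial.C (2 * lam) * Polynomial.X
  | (n + 2) =>
      Polynomial.C (2 * ((n : ℝ) + 1 + lam) / ((n : ℝ) + 2)) * Polynomial.X
          * gegenbauer lam (n + 1)
        - Polynomial.C (((n : ℝ) + 2 * lam) / ((n : ℝ) + 2)) * gegenbauer lam n

/-- Dimension `d_k(n)` of the space of spherical harmonics of degree `k` on `Sⁿ`. -/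
def harmonicDim (n k : ℕ) : ℕ := (n + k).choose n - (n + k - 2).choose n

/-- `Y : EuclideanSpace ℝ (Fin (n+1)) → ℂ` is (the extension of) a spherical harmonic of
degree `k` on `Sⁿ`: it is given by a harmonic polynomial, homogeneous of degree `k`. -/
def IsSphericalHarmonic (n k : ℕ) (Y : EuclideanSpace ℝ (Fin (n + 1)) → ℂ) : Prop :=
  ∃ P : MvPolynomial (Fin (n + 1)) ℂ,
    P.IsHomogeneous k ∧
    (∑ i, MvPolynomial.pderiv i (MvPolynomial.pderiv i P)) = 0 ∧
    ∀ x : EuclideanSpace ℝ (Fin (n + 1)),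
      Y x = MvPolynomial.eval (fun i => (x i : ℂ)) P

/-
For `η` on the sphere, the homogenized Gegenbauer polynomial along `η` is a solid harmonic of
degree `k`, so its restriction `x ↦ C_k^λ(⟨x, η⟩)` can be expanded in the orthonormal family: the
family spans because a homogeneous harmonic polynomial is determined by its coefficients at
monomials in which a fixed variable has exponent at most one, and there are `d_k(n)` of them.

The coefficients of the expansion are given by the Funk–Hecke formula
`∫ P(x) q(⟨x, y⟩) dx = c P(y)`, for `P` a solid harmonic of degree `k` and `q` a polynomial of
degree at most `k`. In polar coordinates its moments `∫ P(x) ⟨x, y⟩ ^ j dx` become Gaussian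
moments, which Gaussian integration by parts reduces to derivatives of `P` in the direction `y`.
Hence `C_k^λ(⟨ξ, η⟩) = c ∑ i, Y i ξ * conj (Y i η)`, and integrating over the diagonal `ξ = η`
gives `C_k^λ(1) |Sⁿ| = c d_k(n)`.
-/

namespace SphericalHarmonics

open MvPolynomial

section PolynomialLaplacian

variable {ι R : Type*} [Fintype ι] [CommRing R]

/-- The Laplacian `∑ i, ∂²/∂Xᵢ²` as an operator on polynomials. -/
def laplacian : MvPolynomial ι R →ₗ[R] MvPolynomial ι R :=
  ∑ i, (pderiv i).toLinearMap ∘ₗ (pderiv i).toLinearMap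

/-- The directional derivative `∑ i, yᵢ ∂/∂Xᵢ` as a derivation on polynomials. -/
def dirDeriv (y : ι → R) : Derivation R (MvPolynomial ι R) (MvPolynomial ι R) :=
  mkDerivation R fun i => C (y i)

/-- The linear form `x ↦ y ⬝ᵥ x` as a polynomial. -/
def linearForm (y : ι → R) : MvPolynomial ι R :=
  ∑ i, C (y i) * X i

lemma laplacian_apply (P : MvPolynomial ι R) : laplacian P = ∑ i, pderiv i (pderiv i P) := by
  simp [laplacian]

omit [Fintype ι] in
lemma dirDeriv_X (y : ι → R) (i : ι) : dirDeriv y (X i) = C (y i) :=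
  mkDerivation_X _ _ _

lemma dirDeriv_apply (y : ι → R) (P : MvPolynomial ι R) :
    dirDeriv y P = ∑ i, C (y i) * pderiv i P := by
  classical
  induction P using MvPolynomial.induction_on with
  | C a => simp [dirDeriv]
  | add P Q hP hQ => simp only [map_add, hP, hQ, mul_add, Finset.sum_add_distrib]
  | mul_X P j hP =>
    simp [hP, dirDeriv_X, pderiv_X, Pi.single_apply, mul_add, Finset.sum_add_distrib,
      Finset.mul_sum, mul_left_comm, mul_comm]

lemma eval_linearForm (x y : ι → R) : eval x (linearForm y) = y ⬝ᵥ x := by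
  simp [linearForm, dotProduct]

lemma pderiv_linearForm (y : ι → R) (i : ι) : pderiv i (linearForm y) = C (y i) := by
  classical
  simp [linearForm, pderiv_X, Pi.single_apply]

lemma pderiv_psum_two (i : ι) : pderiv i (psum ι R 2) = 2 * X i := by
  classical
  simp [psum, pderiv_X, Pi.single_apply]

lemma dirDeriv_linearForm (y z : ι → R) : dirDeriv y (linearForm z) = C (y ⬝ᵥ z) := by
  simp [dirDeriv_apply, pderiv_linearForm, dotProduct]

lemma dirDeriv_psum_two (y : ι → R) : dirDeriv y (psum ι R 2) = 2 * linearForm y := by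
  simp only [dirDeriv_apply, pderiv_psum_two, linearForm, Finset.mul_sum, mul_left_comm]

omit [Fintype ι] in
lemma pderiv_pderiv_comm (i j : ι) (P : MvPolynomial ι R) :
    pderiv i (pderiv j P) = pderiv j (pderiv i P) := by
  classical
  have hbracket : ⁅pderiv (R := R) i, pderiv (R := R) j⁆ = 0 := by
    refine derivation_ext fun l => ?_
    simp [Derivation.commutator_apply, pderiv_X, Pi.single_apply, apply_ite (pderiv _)]
  exact sub_eq_zero.1 (by simpa [Derivation.commutator_apply] using congr($hbracket P))

lemma laplacian_dirDeriv (y : ι → R) (P : MvPolynomial ι R) :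
    laplacian (dirDeriv y P) = dirDeriv y (laplacian P) := by
  simp only [laplacian_apply, dirDeriv_apply, map_sum, pderiv_C_mul]
  rw [Finset.sum_comm]
  simp only [pderiv_pderiv_comm]

lemma laplacian_mul (P Q : MvPolynomial ι R) :
    laplacian (P * Q) = laplacian P * Q + 2 * ∑ i, pderiv i P * pderiv i Q + P * laplacian Q := by
  simp only [laplacian_apply, pderiv_mul, map_add, Finset.mul_sum, Finset.sum_mul,
    ← Finset.sum_add_distrib]
  exact Finset.sum_congr rfl fun i _ => by ring

lemma laplacian_map {S : Type*} [CommRing S] (f : R →+* S) (P : MvPolynomial ι R) :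
    laplacian (map f P) = map f (laplacian P) := by
  simp only [laplacian_apply, pderiv_map, map_sum]

lemma laplacian_linearForm (y : ι → R) : laplacian (linearForm y) = 0 := by
  simp [laplacian_apply, pderiv_linearForm]

lemma laplacian_psum_two : laplacian (psum ι R 2) = 2 * Fintype.card ι := by
  have pderiv_two (i : ι) : pderiv i (2 : MvPolynomial ι R) = 0 := by
    exact_mod_cast (pderiv i).map_natCast 2
  simp [laplacian_apply, pderiv_psum_two, pderiv_two, mul_comm]

lemma laplacian_linearForm_mul (y : ι → R) (P : MvPolynomial ι R) :
    laplacian (linearForm y * P) = 2 * dirDeriv y P + linearForm y * laplacian P := by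
  simp only [laplacian_mul, laplacian_linearForm, pderiv_linearForm, zero_mul, zero_add,
    dirDeriv_apply]

lemma laplacian_psum_two_mul {k : ℕ} {P : MvPolynomial ι R} (hP : P.IsHomogeneous k) :
    laplacian (psum ι R 2 * P) =
      (2 * Fintype.card ι + 4 * k) * P + psum ι R 2 * laplacian P := by
  have euler : ∑ i, pderiv i (psum ι R 2) * pderiv i P = 2 * (k * P) := by
    simp only [pderiv_psum_two, mul_assoc, ← Finset.mul_sum, hP.sum_X_mul_pderiv, nsmul_eq_mul]
  rw [laplacian_mul, laplacian_psum_two, euler]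
  ring

lemma isHomogeneous_linearForm (y : ι → R) : (linearForm y).IsHomogeneous 1 :=
  .sum _ _ _ fun i _ => isHomogeneous_C_mul_X (y i) i

lemma isHomogeneous_psum (m : ℕ) : (psum ι R m).IsHomogeneous m :=
  .sum _ _ _ fun i _ => isHomogeneous_X_pow i m

omit [Fintype ι] in
lemma isHomogeneous_dirDeriv [Finite ι] {k : ℕ} (y : ι → R) {P : MvPolynomial ι R}
    (hP : P.IsHomogeneous (k + 1)) : (dirDeriv y P).IsHomogeneous k := by
  have := Fintype.ofFinite ι
  rw [dirDeriv_apply]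
  exact .sum _ _ _ fun i _ => hP.pderiv.C_mul (y i)

variable (ι R) in
/-- The module of harmonic polynomials that are homogeneous of degree `k`, the solid harmonics
whose restrictions to the sphere are the spherical harmonics of degree `k`. -/
def harmonicSubmodule (k : ℕ) : Submodule R (MvPolynomial ι R) :=
  homogeneousSubmodule ι R k ⊓ LinearMap.ker laplacian

lemma mem_harmonicSubmodule {k : ℕ} {P : MvPolynomial ι R} :
    P ∈ harmonicSubmodule ι R k ↔ P.IsHomogeneous k ∧ laplacian P = 0 := by
  simp [harmonicSubmodule]

lemma dirDeriv_mem_harmonicSubmodule {k : ℕ} (y : ι → R) {P : MvPolynomial ι R}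
    (hP : P ∈ harmonicSubmodule ι R (k + 1)) : dirDeriv y P ∈ harmonicSubmodule ι R k := by
  rw [mem_harmonicSubmodule] at hP ⊢
  exact ⟨isHomogeneous_dirDeriv y hP.1, by rw [laplacian_dirDeriv, hP.2, map_zero]⟩

lemma map_mem_harmonicSubmodule {S : Type*} [CommRing S] (f : R →+* S) {k : ℕ}
    {P : MvPolynomial ι R} (hP : P ∈ harmonicSubmodule ι R k) :
    map f P ∈ harmonicSubmodule ι S k := by
  rw [mem_harmonicSubmodule] at hP ⊢
  exact ⟨hP.1.map f, by rw [laplacian_map, hP.2, map_zero]⟩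

end PolynomialLaplacian

section SteinFunctional

variable {ι R : Type*} [CommRing R]

/-- A linear functional on polynomials satisfies Stein's identity if it exchanges multiplication
by a variable with differentiation, as integration against the standard Gaussian does. -/
def IsSteinFunctional (E : MvPolynomial ι R →ₗ[R] R) : Prop :=
  ∀ i P, E (X i * P) = E (pderiv i P)

namespace IsSteinFunctional

variable [Fintype ι] {E : MvPolynomial ι R →ₗ[R] R} {k : ℕ} {P : MvPolynomial ι R}

lemma apply_linearForm_mul (hE : IsSteinFunctional E) (y : ι → R) (P : MvPolynomial ι R) :
    E (linearForm y * P) = E (dirDeriv y P) := by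
  simp only [linearForm, dirDeriv_apply, ← smul_eq_C_mul, Finset.sum_mul, smul_mul_assoc, map_sum,
    map_smul, hE _ P]

lemma apply_mul_linearForm_pow_succ (hE : IsSteinFunctional E) (y : ι → R)
    (P : MvPolynomial ι R) (j : ℕ) :
    E (P * linearForm y ^ (j + 1)) =
      E (dirDeriv y P * linearForm y ^ j) + j * (y ⬝ᵥ y) * E (P * linearForm y ^ (j - 1)) := by
  have leibniz : dirDeriv y (P * linearForm y ^ j) =
      dirDeriv y P * linearForm y ^ j + (j * (y ⬝ᵥ y)) • (P * linearForm y ^ (j - 1)) := by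
    simp only [Derivation.leibniz, Derivation.leibniz_pow, dirDeriv_linearForm, smul_eq_mul,
      nsmul_eq_mul, smul_eq_C_mul, map_mul, map_natCast]
    ring
  calc E (P * linearForm y ^ (j + 1)) = E (linearForm y * (P * linearForm y ^ j)) := by ring_nf
    _ = _ := by rw [hE.apply_linearForm_mul, leibniz, map_add, map_smul, smul_eq_mul]

-- Applying `E` to Euler's identity `∑ i, X i * ∂ᵢP = k P` turns the left side into `E (ΔP)`.
lemma apply_eq_zero [CharZero R] [NoZeroDivisors R] (hE : IsSteinFunctional E) (hk : k ≠ 0)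
    (hP : P ∈ harmonicSubmodule ι R k) : E P = 0 := by
  obtain ⟨homogeneous, harmonic⟩ := mem_harmonicSubmodule.1 hP
  have : (k : R) * E P = 0 := calc
    (k : R) * E P = E (∑ i, X i * pderiv i P) := by
      rw [homogeneous.sum_X_mul_pderiv, map_nsmul, nsmul_eq_mul]
    _ = E (laplacian P) := by rw [laplacian_apply, map_sum, map_sum]; simp only [hE _ _]
    _ = 0 := by rw [harmonic, map_zero]
  exact (mul_eq_zero.1 this).resolve_left (Nat.cast_ne_zero.2 hk)

lemma apply_mul_linearForm_pow_eq_zero [CharZero R] [NoZeroDivisors R] (hE : IsSteinFunctional E)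
    (hP : P ∈ harmonicSubmodule ι R k) (y : ι → R) {j : ℕ} (hj : j < k) :
    E (P * linearForm y ^ j) = 0 := by
  induction j using Nat.strong_induction_on generalizing k P with
  | _ j ih =>
    match j, k with
    | 0, k => simpa using hE.apply_eq_zero hj.ne' hP
    | j + 1, k + 1 =>
      rw [hE.apply_mul_linearForm_pow_succ, ih (j - 1) (by omega) hP (by omega), mul_zero, add_zero]
      exact ih j (by omega) (dirDeriv_mem_harmonicSubmodule y hP) (by omega)

lemma apply_mul_linearForm_pow_self [CharZero R] [NoZeroDivisors R] (hE : IsSteinFunctional E)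
    (hP : P ∈ harmonicSubmodule ι R k) (y : ι → R) :
    E (P * linearForm y ^ k) = k.factorial * eval y P * E 1 := by
  induction k generalizing P with
  | zero =>
    obtain ⟨a, rfl⟩ : ∃ a, P = C a :=
      ⟨_, totalDegree_eq_zero_iff_eq_C.1 <|
        Nat.le_zero.1 (mem_harmonicSubmodule.1 hP).1.totalDegree_le⟩
    simpa [smul_eq_C_mul] using map_smul E a 1
  | succ k ih =>
    have euler : eval y (dirDeriv y P) = (k + 1 : ℕ) * eval y P := by
      simpa [dirDeriv_apply] using
        congrArg (eval y) (mem_harmonicSubmodule.1 hP).1.sum_X_mul_pderiv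
    have lower : E (P * linearForm y ^ (k - 1)) = 0 :=
      hE.apply_mul_linearForm_pow_eq_zero hP y (by omega)
    rw [hE.apply_mul_linearForm_pow_succ, lower, mul_zero, add_zero,
      ih (dirDeriv_mem_harmonicSubmodule y hP), euler, Nat.factorial_succ, Nat.cast_mul]
    ring

end IsSteinFunctional

end SteinFunctional

section Gegenbauer

lemma natDegree_gegenbauer_le (lam : ℝ) (k : ℕ) : (gegenbauer lam k).natDegree ≤ k := by
  induction k using Nat.twoStepInduction with
  | zero => simp [gegenbauer]
  | one => rw [gegenbauer]; compute_degree
  | more k _ _ => rw [gegenbauer]; compute_degree; omega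

lemma succ_mul_eval_one_gegenbauer (lam : ℝ) (k : ℕ) :
    (k + 1) * (gegenbauer lam (k + 1)).eval 1 = (k + 2 * lam) * (gegenbauer lam k).eval 1 := by
  induction k with
  | zero => simp [gegenbauer]
  | succ k ih =>
    simp only [gegenbauer, Polynomial.eval_sub, Polynomial.eval_mul, Polynomial.eval_C,
      Polynomial.eval_X]
    push_cast
    field_simp
    linear_combination (k + 2 : ℝ) * ih

lemma eval_one_gegenbauer_pos {lam : ℝ} (hlam : 0 < lam) (k : ℕ) :
    0 < (gegenbauer lam k).eval 1 := by
  induction k with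
  | zero => simp [gegenbauer]
  | succ k ih =>
    refine pos_of_mul_pos_right (a := (k : ℝ) + 1) ?_ (by positivity)
    rw [succ_mul_eval_one_gegenbauer]
    positivity

end Gegenbauer

section ZonalPolynomial

variable {ι : Type*} [Fintype ι]

/-- The homogenization `‖x‖ ^ k * C_k^λ (y ⬝ᵥ x / ‖x‖)` of the Gegenbauer polynomial along `y`,
encoded by homogenizing the Gegenbauer recurrence: the argument becomes the linear form of `y`
and the last term is multiplied by the squared norm `psum ι ℝ 2`. -/
def zonalPolynomial (lam : ℝ) (y : ι → ℝ) : ℕ → MvPolynomial ι ℝ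
  | 0 => 1
  | 1 => C (2 * lam) * linearForm y
  | (k + 2) =>
      C (2 * ((k : ℝ) + 1 + lam) / ((k : ℝ) + 2)) * (linearForm y * zonalPolynomial lam y (k + 1))
        - C (((k : ℝ) + 2 * lam) / ((k : ℝ) + 2)) * (psum ι ℝ 2 * zonalPolynomial lam y k)

lemma eval_zonalPolynomial (lam : ℝ) (y : ι → ℝ) {x : ι → ℝ} (hx : x ⬝ᵥ x = 1) (k : ℕ) :
    eval x (zonalPolynomial lam y k) = (gegenbauer lam k).eval (y ⬝ᵥ x) := by
  have hpsum : eval x (psum ι ℝ 2) = 1 := by simp [psum, pow_two, ← hx, dotProduct]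
  induction k using Nat.twoStepInduction with
  | zero => simp [zonalPolynomial, gegenbauer]
  | one => simp [zonalPolynomial, gegenbauer, eval_linearForm]
  | more k h₀ h₁ =>
    simp [zonalPolynomial, gegenbauer, eval_linearForm, hpsum, h₀, h₁, mul_assoc]

lemma isHomogeneous_zonalPolynomial (lam : ℝ) (y : ι → ℝ) (k : ℕ) :
    (zonalPolynomial lam y k).IsHomogeneous k := by
  induction k using Nat.twoStepInduction with
  | zero => exact isHomogeneous_one _ _
  | one => exact (isHomogeneous_linearForm y).C_mul _
  | more k h₀ h₁ =>
    have hlinear := (isHomogeneous_linearForm y).mul h₁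
    have hnorm := (isHomogeneous_psum (ι := ι) (R := ℝ) 2).mul h₀
    rw [show 1 + (k + 1) = k + 2 by omega] at hlinear
    rw [add_comm 2 k] at hnorm
    exact (hlinear.C_mul _).sub (hnorm.C_mul _)

lemma smul_zonalPolynomial_add_two (lam : ℝ) (y : ι → ℝ) (k : ℕ) :
    (k + 2 : ℝ) • zonalPolynomial lam y (k + 2) =
      (2 * (k + 1 + lam)) • (linearForm y * zonalPolynomial lam y (k + 1))
        - (k + 2 * lam) • (psum ι ℝ 2 * zonalPolynomial lam y k) := by
  have hk : (k + 2 : ℝ) ≠ 0 := by positivity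
  simp only [zonalPolynomial, ← smul_eq_C_mul, smul_sub, smul_smul, mul_div_cancel₀ _ hk]

lemma dirDeriv_zonalPolynomial_succ (lam : ℝ) {y : ι → ℝ} (hy : y ⬝ᵥ y = 1) (k : ℕ) :
    dirDeriv y (zonalPolynomial lam y (k + 1)) = (k + 2 * lam) • zonalPolynomial lam y k := by
  have hlinear : dirDeriv y (linearForm y) = 1 := by rw [dirDeriv_linearForm, hy, C_1]
  induction k using Nat.twoStepInduction with
  | zero => simp [zonalPolynomial, hlinear, smul_eq_C_mul]
  | one =>
    have degree_two : zonalPolynomial lam y 2 =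
        (2 * lam * (1 + lam)) • linearForm y ^ 2 - lam • psum ι ℝ 2 := by
      have hdiv : 2 * ((0 : ℕ) + 1 + lam) / ((0 : ℕ) + 2) = 1 + lam := by push_cast; ring
      have hdiv' : ((0 : ℕ) + 2 * lam) / ((0 : ℕ) + 2) = lam := by push_cast; ring
      simp only [zonalPolynomial, hdiv, hdiv', smul_eq_C_mul, C_mul]
      ring
    rw [degree_two, map_sub, Derivation.map_smul, Derivation.map_smul, Derivation.leibniz_pow,
      hlinear, dirDeriv_psum_two, zonalPolynomial]
    simp only [smul_eq_C_mul, smul_eq_mul, nsmul_eq_mul, map_mul, map_add, map_ofNat, map_one,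
      Nat.cast_one, Nat.cast_ofNat]
    ring
  | more k ih₀ ih₁ =>
    have hk : (k + 1 + 2 : ℝ) ≠ 0 := by positivity
    refine smul_right_injective _ hk ?_
    have recur := smul_zonalPolynomial_add_two lam y k
    have differentiated := congrArg (dirDeriv y) (smul_zonalPolynomial_add_two lam y (k + 1))
    push_cast at differentiated ih₁ ⊢
    simp only [map_sub, Derivation.map_smul, Derivation.leibniz, hlinear, dirDeriv_psum_two,
      smul_eq_mul, mul_one, ih₀, ih₁] at differentiated
    rw [differentiated]
    simp only [smul_eq_C_mul, map_add, map_mul, map_natCast, map_one, map_ofNat] at recur ⊢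
    linear_combination -(k + 1 + 2 * C lam) * recur

lemma laplacian_zonalPolynomial (lam : ℝ) (hcard : (Fintype.card ι : ℝ) = 2 * lam + 2)
    {y : ι → ℝ} (hy : y ⬝ᵥ y = 1) (k : ℕ) : laplacian (zonalPolynomial lam y k) = 0 := by
  induction k using Nat.twoStepInduction with
  | zero => simp [zonalPolynomial, laplacian_apply]
  | one => rw [zonalPolynomial, ← smul_eq_C_mul, map_smul, laplacian_linearForm, smul_zero]
  | more k h₀ h₁ =>
    have hk : (k + 2 : ℝ) ≠ 0 := by positivity
    have hcard' : (Fintype.card ι : MvPolynomial ι ℝ) = C (2 * lam + 2) := by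
      rw [← hcard, map_natCast]
    apply smul_right_injective _ hk
    dsimp only
    rw [← map_smul, smul_zonalPolynomial_add_two, map_sub, map_smul, map_smul,
      laplacian_linearForm_mul, laplacian_psum_two_mul (isHomogeneous_zonalPolynomial lam y k),
      h₀, h₁, dirDeriv_zonalPolynomial_succ lam hy, hcard']
    simp only [smul_eq_C_mul, map_add, map_mul, map_natCast, map_one, map_ofNat]
    ring

end ZonalPolynomial

section Dimension

lemma harmonicDim_pos {n : ℕ} (hn : n ≠ 0) (k : ℕ) : 0 < harmonicDim n k := by
  obtain ⟨m, rfl⟩ := Nat.exists_eq_succ_of_ne_zero hn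
  have pascal : (m + 1 + k).choose (m + 1) = (m + k).choose m + (m + k).choose (m + 1) := by
    rw [Nat.add_right_comm, Nat.choose_succ_succ]
  have hle : (m + 1 + k - 2).choose (m + 1) ≤ (m + k).choose (m + 1) :=
    Nat.choose_le_choose _ (by omega)
  have hpos : 0 < (m + k).choose m := Nat.choose_pos (by omega)
  simp only [harmonicDim, Nat.succ_eq_add_one]
  omega

variable {ι R : Type*} [Fintype ι]

-- The coefficient of `ΔP` at `m` expresses the coefficient of `P` at `m + 2 eᵢ` through
-- coefficients of `P` whose exponent of `Xᵢ` is smaller by two.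
lemma eq_zero_of_laplacian_eq_zero [CommRing R] [NoZeroDivisors R] [CharZero R]
    {P : MvPolynomial ι R} (hP : laplacian P = 0) (i : ι)
    (hlow : ∀ m : ι →₀ ℕ, m i < 2 → coeff m P = 0) : P = 0 := by
  suffices h : ∀ N, ∀ m : ι →₀ ℕ, m i = N → coeff m P = 0 by
    ext m
    simpa using h _ m rfl
  intro N
  induction N using Nat.strong_induction_on with
  | _ N ih =>
    intro m hm
    by_cases hlt : m i < 2
    · exact hlow m hlt
    obtain ⟨m', rfl⟩ : ∃ m', m = m' + Finsupp.single i 1 + Finsupp.single i 1 :=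
      ⟨m - Finsupp.single i 2, by
        rw [add_assoc, ← Finsupp.single_add,
          tsub_add_cancel_of_le (Finsupp.single_le_iff.2 (not_lt.1 hlt))]⟩
    have hcoeff := congrArg (coeff m') hP
    simp only [laplacian_apply, coeff_sum, coeff_pderiv, coeff_zero] at hcoeff
    rw [Finset.sum_eq_single_of_mem i (Finset.mem_univ i)] at hcoeff
    · have succ_ne : (m' i : R) + 1 + 1 ≠ 0 := mod_cast (m' i + 1).succ_ne_zero
      simpa [succ_ne, Nat.cast_add_one_ne_zero] using hcoeff
    · intro j _ hj
      rw [ih (m' i) (by simp at hm; omega) _ (by simp [hj.symm]), zero_mul, zero_mul]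

variable [DecidableEq ι]

lemma filter_le_finsuppAntidiag_add (i : ι) (k r : ℕ) :
    {m ∈ (Finset.univ : Finset ι).finsuppAntidiag (k + r) | r ≤ m i} =
      (Finset.univ.finsuppAntidiag k).map (addRightEmbedding (Finsupp.single i r)) := by
  ext m
  simp only [Finset.mem_filter, Finset.mem_map, Finset.mem_finsuppAntidiag', Finset.subset_univ,
    and_true, addRightEmbedding_apply]
  constructor
  · rintro ⟨hsum, hle⟩
    have hcancel := tsub_add_cancel_of_le (Finsupp.single_le_iff.2 hle)
    refine ⟨m - Finsupp.single i r, ?_, hcancel⟩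
    rw [← hcancel, Finsupp.sum_add_index' (by simp) (by simp)] at hsum
    simpa using hsum
  · rintro ⟨m, rfl, rfl⟩
    simp [Finsupp.sum_add_index']

/-- The exponents of total degree `k` in which `Xᵢ` occurs at most to the first power. The
coefficients at these exponents determine a homogeneous harmonic polynomial of degree `k`. -/
def lowExponents (i : ι) (k : ℕ) : Finset (ι →₀ ℕ) :=
  {m ∈ Finset.univ.finsuppAntidiag k | m i < 2}

lemma card_lowExponents (n k : ℕ) (hn : n ≠ 0) :
    (lowExponents (0 : Fin (n + 1)) k).card = harmonicDim n k := by
  have card_antidiag (j : ℕ) :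
      ((Finset.univ : Finset (Fin (n + 1))).finsuppAntidiag j).card = (n + j).choose n := by
    rw [Finset.card_finsuppAntidiag_nat_eq_choose, Finset.card_univ, Fintype.card_fin,
      Nat.add_right_comm, Nat.add_sub_cancel, Nat.choose_symm_add]
  have card_high : Finset.card {m ∈ (Finset.univ : Finset (Fin (n + 1))).finsuppAntidiag k |
      ¬ m 0 < 2} = (n + k - 2).choose n := by
    simp only [not_lt]
    obtain hk | ⟨j, rfl⟩ := (lt_or_ge k 2).imp_right Nat.exists_eq_add_of_le'
    · rw [Nat.choose_eq_zero_of_lt (by omega), Finset.card_eq_zero, Finset.filter_eq_empty_iff]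
      intro m hm
      have hsum : ∑ i, m i = k := (Finset.mem_finsuppAntidiag.1 hm).1
      have hle := Finset.single_le_sum (fun i _ => Nat.zero_le (m i)) (Finset.mem_univ 0)
      omega
    · rw [filter_le_finsuppAntidiag_add, Finset.card_map, card_antidiag]
      rfl
  have split := Finset.card_filter_add_card_filter_not
    (s := (Finset.univ : Finset (Fin (n + 1))).finsuppAntidiag k) (fun m => m 0 < 2)
  rw [card_high, card_antidiag] at split
  exact (Nat.sub_eq_of_eq_add split.symm).symm

variable {K : Type*} [Field K]

/-- The coefficients of a solid harmonic at the exponents in `lowExponents i k`. -/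
def lowCoeffs (i : ι) (k : ℕ) : harmonicSubmodule ι K k →ₗ[K] lowExponents i k → K :=
  LinearMap.pi fun m => lcoeff K m.1 ∘ₗ (harmonicSubmodule ι K k).subtype

variable [CharZero K]

lemma lowCoeffs_injective (i : ι) (k : ℕ) :
    Function.Injective (lowCoeffs i k : harmonicSubmodule ι K k →ₗ[K] _) := by
  rw [injective_iff_map_eq_zero]
  rintro ⟨P, hP⟩ hzero
  obtain ⟨homogeneous, harmonic⟩ := mem_harmonicSubmodule.1 hP
  refine Subtype.ext (eq_zero_of_laplacian_eq_zero harmonic i fun m hm => ?_)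
  by_cases hdeg : m.degree = k
  · have hmem : m ∈ lowExponents i k := by
      simpa [lowExponents, Finset.mem_finsuppAntidiag, ← Finsupp.degree_eq_sum] using
        ⟨hdeg, Nat.le_of_lt_succ hm⟩
    exact congrFun hzero ⟨m, hmem⟩
  · exact homogeneous.coeff_eq_zero hdeg

omit [DecidableEq ι] in
lemma finiteDimensional_harmonicSubmodule (i : ι) (k : ℕ) :
    FiniteDimensional K (harmonicSubmodule ι K k) := by
  classical
  exact .of_injective _ (lowCoeffs_injective i k)

lemma finrank_harmonicSubmodule_le (i : ι) (k : ℕ) :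
    Module.finrank K (harmonicSubmodule ι K k) ≤ (lowExponents i k).card := by
  simpa using LinearMap.finrank_le_finrank_of_injective (lowCoeffs_injective (K := K) i k)

lemma finrank_harmonicSubmodule_fin_le {n : ℕ} (hn : n ≠ 0) (k : ℕ) :
    Module.finrank K (harmonicSubmodule (Fin (n + 1)) K k) ≤ harmonicDim n k :=
  (finrank_harmonicSubmodule_le 0 k).trans_eq (card_lowExponents n k hn)

end Dimension

section PolarCoordinates

variable {E F : Type*} [NormedAddCommGroup E] [NormedSpace ℝ E] [FiniteDimensional ℝ E]
  [Nontrivial E] [MeasurableSpace E] [BorelSpace E] [NormedAddCommGroup F] [NormedSpace ℝ F]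

lemma integral_volumeIoiPow (d : ℕ) (φ : ℝ → F) :
    ∫ r : Set.Ioi (0 : ℝ), φ r ∂Measure.volumeIoiPow d = ∫ r in Set.Ioi (0 : ℝ), r ^ d • φ r := by
  simp only [Measure.volumeIoiPow, ENNReal.ofReal]
  rw [integral_withDensity_eq_integral_smul (measurable_subtype_coe.pow_const _).real_toNNReal,
    integral_subtype_comap measurableSet_Ioi fun r : ℝ => Real.toNNReal (r ^ d) • φ r]
  refine setIntegral_congr_fun measurableSet_Ioi fun r hr => ?_
  rw [NNReal.smul_def, Real.coe_toNNReal _ (pow_nonneg hr.out.le _)]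

lemma integral_fun_norm_smul_of_homogeneous (μ : Measure E) [μ.IsAddHaarMeasure] {m : ℕ}
    {f : E → F} (hf : ∀ r : ℝ, 0 < r → ∀ x, f (r • x) = r ^ m • f x) (φ : ℝ → ℝ) :
    ∫ x, φ ‖x‖ • f x ∂μ =
      (∫ r in Set.Ioi (0 : ℝ), r ^ (Module.finrank ℝ E - 1 + m) * φ r) •
        ∫ x : Metric.sphere (0 : E) 1, f x ∂μ.toSphere := by
  set d := Module.finrank ℝ E - 1
  have hpolar (x : ({0}ᶜ : Set E)) :
      φ ‖x.1‖ • f x = (‖x.1‖ ^ m * φ ‖x.1‖) • f (‖x.1‖⁻¹ • x.1) := by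
    have hx : 0 < ‖x.1‖ := norm_pos_iff.2 x.2
    rw [mul_comm, mul_smul, ← hf _ hx, smul_inv_smul₀ hx.ne']
  calc
    ∫ x, φ ‖x‖ • f x ∂μ = ∫ x : ({0}ᶜ : Set E), φ ‖x.1‖ • f x ∂μ.comap (↑) := by
      rw [integral_subtype_comap (measurableSet_singleton _).compl fun x : E => φ ‖x‖ • f x,
        restrict_compl_singleton]
    _ = ∫ p : Metric.sphere (0 : E) 1 × Set.Ioi (0 : ℝ), (p.2.1 ^ m * φ p.2) • f p.1
          ∂μ.toSphere.prod (.volumeIoiPow d) := by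
      simpa only [hpolar, homeomorphUnitSphereProd_apply_fst_coe,
        homeomorphUnitSphereProd_apply_snd_coe] using
        μ.measurePreserving_homeomorphUnitSphereProd.integral_comp
          (Homeomorph.measurableEmbedding _)
          fun p : Metric.sphere (0 : E) 1 × Set.Ioi (0 : ℝ) => (p.2.1 ^ m * φ p.2) • f p.1
    _ = ∫ p : Set.Ioi (0 : ℝ) × Metric.sphere (0 : E) 1, (p.1.1 ^ m * φ p.1) • f p.2
          ∂(Measure.volumeIoiPow d).prod μ.toSphere :=
      (integral_prod_swap _).symm
    _ = (∫ r : Set.Ioi (0 : ℝ), r.1 ^ m * φ r ∂.volumeIoiPow d) •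
          ∫ x : Metric.sphere (0 : E) 1, f x ∂μ.toSphere :=
      integral_prod_smul (fun r : Set.Ioi (0 : ℝ) => r.1 ^ m * φ r)
        fun x : Metric.sphere (0 : E) 1 => f x
    _ = _ := by
      rw [integral_volumeIoiPow d fun r => r ^ m * φ r]
      simp only [smul_eq_mul, pow_add, mul_assoc]

lemma integral_pow_mul_exp_neg_half_mul_sq_pos (m : ℕ) :
    0 < ∫ r in Set.Ioi (0 : ℝ), r ^ m * Real.exp (-(1 / 2) * r ^ 2) := by
  have hgamma := integral_rpow_mul_exp_neg_mul_rpow (p := 2) (q := m) (b := 1 / 2) (by norm_num)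
    (neg_one_lt_zero.trans_le m.cast_nonneg) (by norm_num)
  simp only [Real.rpow_natCast, Real.rpow_ofNat] at hgamma
  have := Real.Gamma_pos_of_pos (s := (m + 1 : ℝ) / 2) (by positivity)
  rw [hgamma]
  positivity

end PolarCoordinates

lemma eval_smul_of_isHomogeneous {ι R : Type*} [CommSemiring R] {k : ℕ} {P : MvPolynomial ι R}
    (hP : P.IsHomogeneous k) (r : R) (x : ι → R) : eval (r • x) P = r ^ k * eval x P := by
  simp only [eval_eq, Finset.mul_sum, Pi.smul_apply, smul_eq_mul, mul_pow, Finset.prod_mul_distrib,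
    Finset.prod_pow_eq_pow_sum]
  refine Finset.sum_congr rfl fun d hd => ?_
  rw [← hP.degree_eq_sum_deg_support hd, mul_left_comm]

section RealPoints

variable {ι : Type*}

/-- Evaluation of a complex polynomial at a real point. -/
def evalReal (x : EuclideanSpace ℝ ι) : MvPolynomial ι ℂ →ₐ[ℂ] ℂ :=
  aeval fun i => (x i : ℂ)

lemma evalReal_eq_eval (x : EuclideanSpace ℝ ι) (P : MvPolynomial ι ℂ) :
    evalReal x P = eval (fun i => (x i : ℂ)) P :=
  congr($(coe_aeval_eq_eval _) P)

lemma evalReal_X (x : EuclideanSpace ℝ ι) (i : ι) : evalReal x (X i) = x i := by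
  simp [evalReal]

lemma evalReal_map_ofReal (x : EuclideanSpace ℝ ι) (P : MvPolynomial ι ℝ) :
    evalReal x (map (algebraMap ℝ ℂ) P) = (eval x.ofLp P : ℝ) := by
  rw [evalReal, aeval_map_algebraMap]
  exact aeval_algebraMap_apply ℂ x.ofLp P

lemma evalReal_map_conj (x : EuclideanSpace ℝ ι) (P : MvPolynomial ι ℂ) :
    evalReal x (map (starRingEnd ℂ) P) = starRingEnd ℂ (evalReal x P) := by
  simp only [evalReal_eq_eval]
  rw [eval_map, ← eval₂_id, eval₂_comp_left]
  simp [Function.comp_def]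

lemma evalReal_smul {k : ℕ} {P : MvPolynomial ι ℂ} (hP : P.IsHomogeneous k) (r : ℝ)
    (x : EuclideanSpace ℝ ι) : evalReal (r • x) P = r ^ k • evalReal x P := by
  simpa [evalReal_eq_eval, Pi.smul_def] using
    eval_smul_of_isHomogeneous hP (r : ℂ) fun i => (x i : ℂ)

lemma continuous_evalReal (P : MvPolynomial ι ℂ) :
    Continuous fun x : EuclideanSpace ℝ ι => evalReal x P := by
  simp only [evalReal_eq_eval]
  exact (continuous_eval P).comp (by fun_prop)

lemma hasLineDerivAt_evalReal [DecidableEq ι] (P : MvPolynomial ι ℂ) (x : EuclideanSpace ℝ ι)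
    (i : ι) : HasLineDerivAt ℝ (fun x => evalReal x P) (evalReal x (pderiv i P)) x
      (EuclideanSpace.single i 1) := by
  induction P using MvPolynomial.induction_on with
  | C a => simpa [HasLineDerivAt, evalReal] using hasDerivAt_const (0 : ℝ) a
  | add P Q hP hQ =>
    simp only [HasLineDerivAt, map_add] at hP hQ ⊢
    exact hP.add hQ
  | mul_X P j hP =>
    have hX : HasDerivAt (fun t : ℝ => evalReal (x + t • EuclideanSpace.single i 1) (X j))
        (evalReal x (pderiv i (X j))) 0 := by
      simp only [evalReal_X, PiLp.add_apply, PiLp.smul_apply, PiLp.single_apply,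
        smul_eq_mul, Complex.ofReal_add]
      obtain rfl | hij := eq_or_ne j i
      · simpa using Complex.ofRealCLM.hasDerivAt.const_add (x j : ℂ)
      · simpa [hij, pderiv_X_of_ne hij] using hasDerivAt_const (0 : ℝ) (x j : ℂ)
    simp only [HasLineDerivAt, map_mul, pderiv_mul, map_add] at hP ⊢
    have hmul := hP.mul hX
    simp only [zero_smul, add_zero] at hmul
    exact hmul

lemma evalReal_linearForm [Fintype ι] (x y : EuclideanSpace ℝ ι) :
    evalReal x (linearForm fun i => (y i : ℂ)) = (⟪x, y⟫ : ℝ) := by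
  simp [evalReal_eq_eval, eval_linearForm, dotProduct, PiLp.inner_apply]

end RealPoints

section GaussianFunctional

variable {ι : Type*} [Fintype ι]

lemma mul_exp_neg_mul_sq_le {b : ℝ} (hb : 0 < b) (t : ℝ) :
    t * Real.exp (-b * t ^ 2) ≤ 1 + b⁻¹ := by
  have hle : t ≤ (1 + b⁻¹) * Real.exp (b * t ^ 2) := calc
    t ≤ (1 + b⁻¹) * (b * t ^ 2 + 1) := by
      have : (1 + b⁻¹) * (b * t ^ 2 + 1) = 1 + t ^ 2 + (b * t ^ 2 + b⁻¹) := by field_simp; ring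
      have : 0 ≤ b * t ^ 2 + b⁻¹ := by positivity
      nlinarith [sq_nonneg (t - 1)]
    _ ≤ (1 + b⁻¹) * Real.exp (b * t ^ 2) := by gcongr; exact Real.add_one_le_exp _
  rwa [neg_mul, Real.exp_neg, ← div_eq_mul_inv, div_le_iff₀ (Real.exp_pos _)]

-- Half of the Gaussian decay is spent on each additional variable.
lemma integrable_exp_smul_evalReal (P : MvPolynomial ι ℂ) {a : ℝ} (ha : 0 < a) :
    Integrable fun x : EuclideanSpace ℝ ι => Real.exp (-a * ‖x‖ ^ 2) • evalReal x P := by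
  induction P using MvPolynomial.induction_on generalizing a with
  | C c =>
    have := GaussianFourier.integrable_cexp_neg_mul_sq_norm_add (V := EuclideanSpace ℝ ι)
      (b := a) (by simpa using ha) 0 0
    simpa [evalReal] using this.mul_const c
  | add P Q hP hQ =>
    simp only [map_add, smul_add]
    exact (hP ha).add (hQ ha)
  | mul_X P i hP =>
    have hbound (x : EuclideanSpace ℝ ι) :
        ‖Real.exp (-(a / 2) * ‖x‖ ^ 2) • (x i : ℂ)‖ ≤ 1 + (a / 2)⁻¹ := calc
      _ ≤ ‖x‖ * Real.exp (-(a / 2) * ‖x‖ ^ 2) := by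
        rw [norm_smul, Complex.norm_real, Real.norm_of_nonneg (Real.exp_pos _).le, mul_comm]
        gcongr
        exact PiLp.norm_apply_le x i
      _ ≤ _ := mul_exp_neg_mul_sq_le (half_pos ha) _
    have hmul := (hP (half_pos ha)).mul_bdd (c := 1 + (a / 2)⁻¹)
      (g := fun x => Real.exp (-(a / 2) * ‖x‖ ^ 2) • (x i : ℂ))
      (Continuous.aestronglyMeasurable (by fun_prop)) (.of_forall hbound)
    refine hmul.congr (.of_forall fun x => ?_)
    dsimp only
    rw [smul_mul_smul_comm, ← Real.exp_add, map_mul, evalReal_X]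
    ring_nf

variable (ι) in
/-- Integration against the unnormalized Gaussian density `exp (-‖x‖² / 2)`, as a functional on
complex polynomials. -/
def gaussianFunctional : MvPolynomial ι ℂ →ₗ[ℂ] ℂ where
  toFun P := ∫ x : EuclideanSpace ℝ ι, Real.exp (-(1 / 2) * ‖x‖ ^ 2) • evalReal x P
  map_add' P Q := by
    simp only [map_add, smul_add]
    exact integral_add (integrable_exp_smul_evalReal P (by norm_num))
      (integrable_exp_smul_evalReal Q (by norm_num))
  map_smul' c P := by
    simp only [map_smul, smul_comm _ c, integral_smul, RingHom.id_apply]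

lemma hasLineDerivAt_exp_neg_half_mul_sq [DecidableEq ι] (x : EuclideanSpace ℝ ι) (i : ι) :
    HasLineDerivAt ℝ (fun x : EuclideanSpace ℝ ι => Real.exp (-(1 / 2) * ‖x‖ ^ 2))
      (-(x i * Real.exp (-(1 / 2) * ‖x‖ ^ 2))) x (EuclideanSpace.single i 1) := by
  have hderiv := ((hasStrictFDerivAt_norm_sq x).hasFDerivAt.const_mul (-(1 / 2))).exp.hasLineDerivAt
    (EuclideanSpace.single i 1)
  have hvalue : (Real.exp (-(1 / 2) * ‖x‖ ^ 2) • (-(1 / 2) : ℝ) • 2 • innerSL ℝ x)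
      (EuclideanSpace.single i 1) = -(x i * Real.exp (-(1 / 2) * ‖x‖ ^ 2)) := by
    simp only [smul_apply, coe_innerSL_apply, EuclideanSpace.inner_single_right,
      conj_trivial, one_mul, nsmul_eq_mul, Nat.cast_ofNat, smul_eq_mul]
    ring
  rwa [hvalue] at hderiv

lemma isSteinFunctional_gaussianFunctional : IsSteinFunctional (gaussianFunctional ι) := by
  classical
  intro i P
  have hint (Q : MvPolynomial ι ℂ) := integrable_exp_smul_evalReal Q (a := 1 / 2) (by norm_num)
  have moment (x : EuclideanSpace ℝ ι) : (x i * Real.exp (-(1 / 2) * ‖x‖ ^ 2)) • evalReal x P =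
      Real.exp (-(1 / 2) * ‖x‖ ^ 2) • evalReal x (X i * P) := by
    rw [map_mul, evalReal_X, mul_comm, mul_smul, ← Complex.real_smul]
  have byParts := integral_bilinear_hasLineDerivAt_right_eq_neg_left_of_integrable
    (μ := (volume : Measure (EuclideanSpace ℝ ι))) (B := ContinuousLinearMap.lsmul ℝ ℝ)
    (f := fun x => Real.exp (-(1 / 2) * ‖x‖ ^ 2)) 
    (f' := fun x => -(x i * Real.exp (-(1 / 2) * ‖x‖ ^ 2)))
    (g := fun x => evalReal x P) (g' := fun x => evalReal x (pderiv i P))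
    (v := EuclideanSpace.single i 1)
    (by simpa only [ContinuousLinearMap.lsmul_apply, neg_smul, moment] using
      (hint (X i * P)).fun_neg)
    (hint (pderiv i P)) (hint P)
    (fun x _ => hasLineDerivAt_exp_neg_half_mul_sq x i) (fun x _ => hasLineDerivAt_evalReal P x i)
  simp only [ContinuousLinearMap.lsmul_apply, neg_smul, moment, integral_neg, neg_neg] at byParts
  exact byParts.symm

end GaussianFunctional

section FunkHecke

variable {ι : Type*} [Fintype ι]

lemma integrable_evalReal_toSphere (P : MvPolynomial ι ℂ) :
    Integrable (fun x : Metric.sphere (0 : EuclideanSpace ℝ ι) 1 => evalReal x.1 P)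
      (volume : Measure (EuclideanSpace ℝ ι)).toSphere :=
  ((continuous_evalReal P).comp continuous_subtype_val).integrable_of_hasCompactSupport
    (.of_compactSpace _)

variable (ι) in
/-- Integration over the unit sphere against its surface measure, as a functional on complex
polynomials. -/
def sphereIntegral : MvPolynomial ι ℂ →ₗ[ℂ] ℂ where
  toFun P := ∫ x : Metric.sphere (0 : EuclideanSpace ℝ ι) 1, evalReal x.1 P ∂volume.toSphere
  map_add' P Q := by
    simp only [map_add]
    exact integral_add (integrable_evalReal_toSphere P) (integrable_evalReal_toSphere Q)
  map_smul' c P := by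
    simp only [map_smul, integral_smul, RingHom.id_apply]

lemma sphereIntegral_apply (P : MvPolynomial ι ℂ) : sphereIntegral ι P =
    ∫ x : Metric.sphere (0 : EuclideanSpace ℝ ι) 1, evalReal x.1 P ∂volume.toSphere :=
  rfl

variable [Nonempty ι]

lemma gaussianFunctional_eq_smul_sphereIntegral {m : ℕ} {P : MvPolynomial ι ℂ}
    (hP : P.IsHomogeneous m) : gaussianFunctional ι P =
      (∫ r in Set.Ioi (0 : ℝ), r ^ (Fintype.card ι - 1 + m) * Real.exp (-(1 / 2) * r ^ 2)) •
        sphereIntegral ι P := by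
  rw [← finrank_euclideanSpace (𝕜 := ℝ) (ι := ι)]
  exact integral_fun_norm_smul_of_homogeneous volume (fun r _ => evalReal_smul hP r)
    fun r => Real.exp (-(1 / 2) * r ^ 2)

lemma exists_sphereIntegral_mul_linearForm_pow {j k : ℕ} (hj : j ≤ k) :
    ∃ c : ℂ, ∀ P ∈ harmonicSubmodule ι ℂ k, ∀ y : ι → ℂ,
      sphereIntegral ι (P * linearForm y ^ j) = c * eval y P := by
  set radial := ∫ r in Set.Ioi (0 : ℝ),
    r ^ (Fintype.card ι - 1 + (k + 1 * j)) * Real.exp (-(1 / 2) * r ^ 2)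
  have hradial : (radial : ℂ) ≠ 0 :=
    Complex.ofReal_ne_zero.2 (integral_pow_mul_exp_neg_half_mul_sq_pos _).ne'
  have polar (P) (hP : P ∈ harmonicSubmodule ι ℂ k) (y : ι → ℂ) :
      sphereIntegral ι (P * linearForm y ^ j) =
        (radial : ℂ)⁻¹ * gaussianFunctional ι (P * linearForm y ^ j) := by
    rw [gaussianFunctional_eq_smul_sphereIntegral
      ((mem_harmonicSubmodule.1 hP).1.mul ((isHomogeneous_linearForm y).pow j)),
      Complex.real_smul, inv_mul_cancel_left₀ hradial]
  obtain hlt | rfl := hj.lt_or_eq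
  · refine ⟨0, fun P hP y => ?_⟩
    rw [polar P hP, isSteinFunctional_gaussianFunctional.apply_mul_linearForm_pow_eq_zero hP y hlt]
    ring
  · refine ⟨(radial : ℂ)⁻¹ * (j.factorial * gaussianFunctional ι 1), fun P hP y => ?_⟩
    rw [polar P hP, isSteinFunctional_gaussianFunctional.apply_mul_linearForm_pow_self hP]
    ring

lemma exists_integral_evalReal_mul_eval_inner {q : Polynomial ℝ} {k : ℕ} (hq : q.natDegree ≤ k) :
    ∃ c : ℂ, ∀ P ∈ harmonicSubmodule ι ℂ k, ∀ y : EuclideanSpace ℝ ι,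
      ∫ x : Metric.sphere (0 : EuclideanSpace ℝ ι) 1,
        evalReal x.1 P * (q.eval ⟪x.1, y⟫ : ℝ) ∂volume.toSphere = c * evalReal y P := by
  choose! c hc using fun (j : ℕ) (hj : j ≤ k) =>
    exists_sphereIntegral_mul_linearForm_pow (ι := ι) hj
  refine ⟨∑ j ∈ Finset.range (k + 1), q.coeff j * c j, fun P hP y => ?_⟩
  have expand (x : EuclideanSpace ℝ ι) : evalReal x P * (q.eval ⟪x, y⟫ : ℝ) =
      evalReal x (∑ j ∈ Finset.range (k + 1),
        (q.coeff j : ℂ) • (P * linearForm (fun i => (y i : ℂ)) ^ j)) := by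
    simp only [Polynomial.eval_eq_sum_range' (Nat.lt_succ_of_le hq), map_sum, map_smul, map_mul,
      map_pow, evalReal_linearForm, smul_eq_mul, Complex.ofReal_sum, Complex.ofReal_mul,
      Complex.ofReal_pow, Finset.mul_sum, mul_left_comm]
  simp only [expand]
  rw [← sphereIntegral_apply]
  simp only [map_sum, map_smul, smul_eq_mul, Finset.sum_mul]
  refine Finset.sum_congr rfl fun j hj => ?_
  rw [hc j (Nat.le_of_lt_succ (Finset.mem_range.1 hj)) P hP, evalReal_eq_eval, mul_assoc]

end FunkHecke

section AdditionTheorem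

lemma sum_dual_smul_eq_of_finrank_le {J K V : Type*} [Fintype J] [DecidableEq J] [Field K]
    [AddCommGroup V] [Module K V] [FiniteDimensional K V] (φ : J → Module.Dual K V) (v : J → V)
    (hφ : ∀ i j, φ i (v j) = if i = j then 1 else 0)
    (hJ : Module.finrank K V ≤ Fintype.card J) (w : V) : ∑ j, φ j w • v j = w := by
  have hv : LinearIndependent K v := .of_pairwise_dual_eq_zero_one v φ
    (fun i j hij => by simp [hφ, hij]) fun i => by simp [hφ]
  have hcard : Fintype.card J = Module.finrank K V := hv.fintype_card_le_finrank.antisymm hJ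
  have hspan : w ∈ Submodule.span K (Set.range v) := by
    rw [hv.span_eq_top_of_card_eq_finrank' hcard]
    trivial
  obtain ⟨c, rfl⟩ := Submodule.mem_span_range_iff_exists_fun K |>.1 hspan
  simp [hφ]

variable {ι J : Type*} [Fintype ι] [Fintype J] {k : ℕ} {p : J → MvPolynomial ι ℂ}

/-- A family of polynomials is orthonormal on the sphere if its restrictions are orthonormal for
the Hermitian inner product of the square-integrable functions there. -/
def IsSphereOrthonormal [DecidableEq J] (p : J → MvPolynomial ι ℂ) : Prop :=
  ∀ i j, sphereIntegral ι (p i * map (starRingEnd ℂ) (p j)) = if i = j then 1 else 0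

variable [DecidableEq J]

lemma sum_sphereIntegral_smul_eq (hp : ∀ j, p j ∈ harmonicSubmodule ι ℂ k)
    (horth : IsSphereOrthonormal p)
    (hJ : Module.finrank ℂ (harmonicSubmodule ι ℂ k) ≤ Fintype.card J) [Nonempty ι]
    {P : MvPolynomial ι ℂ} (hP : P ∈ harmonicSubmodule ι ℂ k) :
    ∑ j, sphereIntegral ι (P * map (starRingEnd ℂ) (p j)) • p j = P := by
  have := finiteDimensional_harmonicSubmodule (K := ℂ) (Classical.arbitrary ι) k
  have expansion := sum_dual_smul_eq_of_finrank_le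
    (fun j => sphereIntegral ι ∘ₗ LinearMap.mulRight ℂ (map (starRingEnd ℂ) (p j)) ∘ₗ
      (harmonicSubmodule ι ℂ k).subtype)
    (fun j => ⟨p j, hp j⟩) (fun i j => by simpa [eq_comm] using horth j i) hJ ⟨P, hP⟩
  simpa using congr(($expansion : MvPolynomial ι ℂ))

variable {lam : ℝ}

-- The zonal polynomial at `η` is expanded in the basis; Funk–Hecke computes its coefficients.
lemma exists_eval_gegenbauer_inner_eq (hcard : (Fintype.card ι : ℝ) = 2 * lam + 2)
    (hp : ∀ j, p j ∈ harmonicSubmodule ι ℂ k) (horth : IsSphereOrthonormal p)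
    (hJ : Module.finrank ℂ (harmonicSubmodule ι ℂ k) ≤ Fintype.card J) [Nonempty ι] :
    ∃ c : ℂ, ∀ ξ η : Metric.sphere (0 : EuclideanSpace ℝ ι) 1,
      (((gegenbauer lam k).eval ⟪ξ.1, η.1⟫ : ℝ) : ℂ) =
        c * ∑ j, evalReal ξ.1 (p j) * starRingEnd ℂ (evalReal η.1 (p j)) := by
  obtain ⟨c, hc⟩ := exists_integral_evalReal_mul_eval_inner (ι := ι)
    (natDegree_gegenbauer_le lam k)
  refine ⟨c, fun ξ η => ?_⟩
  have dot_self (x : Metric.sphere (0 : EuclideanSpace ℝ ι) 1) : x.1.ofLp ⬝ᵥ x.1.ofLp = 1 := by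
    have hx := EuclideanSpace.real_norm_sq_eq x.1
    rw [norm_eq_of_mem_sphere x, one_pow] at hx
    simp only [dotProduct, ← pow_two, hx]
  set zonal := map (algebraMap ℝ ℂ) (zonalPolynomial lam η.1.ofLp k)
  have evalReal_zonal (x : Metric.sphere (0 : EuclideanSpace ℝ ι) 1) :
      evalReal x.1 zonal = ((gegenbauer lam k).eval ⟪x.1, η.1⟫ : ℝ) := by
    rw [evalReal_map_ofReal, eval_zonalPolynomial lam _ (dot_self x)]
    rfl
  have zonal_mem : zonal ∈ harmonicSubmodule ι ℂ k :=
    map_mem_harmonicSubmodule _ <| mem_harmonicSubmodule.2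
      ⟨isHomogeneous_zonalPolynomial lam _ k, laplacian_zonalPolynomial lam hcard (dot_self η) k⟩
  have coefficient (j : J) : sphereIntegral ι (zonal * map (starRingEnd ℂ) (p j)) =
      c * starRingEnd ℂ (evalReal η.1 (p j)) := by
    rw [← evalReal_map_conj, ← hc _ (map_mem_harmonicSubmodule _ (hp j)), sphereIntegral_apply]
    simp only [map_mul, evalReal_zonal, mul_comm]
  rw [← evalReal_zonal, ← sum_sphereIntegral_smul_eq hp horth hJ zonal_mem]
  simp only [map_sum, map_smul, coefficient, smul_eq_mul, Finset.mul_sum, mul_assoc,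
    mul_comm (evalReal ξ.1 _)]

lemma eval_gegenbauer_inner_mul_card (hcard : (Fintype.card ι : ℝ) = 2 * lam + 2)
    (hp : ∀ j, p j ∈ harmonicSubmodule ι ℂ k) (horth : IsSphereOrthonormal p)
    (hJ : Module.finrank ℂ (harmonicSubmodule ι ℂ k) ≤ Fintype.card J) [Nonempty ι]
    (ξ η : Metric.sphere (0 : EuclideanSpace ℝ ι) 1) :
    ((gegenbauer lam k).eval ⟪ξ.1, η.1⟫ : ℝ) * (Fintype.card J : ℂ) =
      ((gegenbauer lam k).eval 1 : ℝ) *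
        (volume : Measure (EuclideanSpace ℝ ι)).toSphere.real Set.univ *
          ∑ j, evalReal ξ.1 (p j) * starRingEnd ℂ (evalReal η.1 (p j)) := by
  obtain ⟨c, hc⟩ := exists_eval_gegenbauer_inner_eq hcard hp horth hJ
  have diagonal (x : Metric.sphere (0 : EuclideanSpace ℝ ι) 1) :
      evalReal x.1 (c • ∑ j, p j * map (starRingEnd ℂ) (p j)) =
        ((gegenbauer lam k).eval 1 : ℝ) := by
    simpa [evalReal_map_conj] using (hc x x).symm
  have hc_card : c * Fintype.card J = ((gegenbauer lam k).eval 1 : ℝ) *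
      (volume : Measure (EuclideanSpace ℝ ι)).toSphere.real Set.univ := calc
    c * Fintype.card J = sphereIntegral ι (c • ∑ j, p j * map (starRingEnd ℂ) (p j)) := by
      simp [horth _ _]
    _ = _ := by
      simp only [sphereIntegral_apply, diagonal, integral_const, Complex.real_smul, mul_comm]
  rw [hc, ← hc_card]
  ring

lemma isSphericalHarmonic_iff {n k : ℕ} {Y : EuclideanSpace ℝ (Fin (n + 1)) → ℂ} :
    IsSphericalHarmonic n k Y ↔
      ∃ P ∈ harmonicSubmodule (Fin (n + 1)) ℂ k, ∀ x, Y x = evalReal x P := by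
  simp only [IsSphericalHarmonic, mem_harmonicSubmodule, laplacian_apply, evalReal_eq_eval,
    and_assoc]

end AdditionTheorem

end SphericalHarmonics

open SphericalHarmonics

/-- Addition theorem for spherical harmonics on `Sⁿ`:
`C_k^{(n-1)/2}(ξᵀη) / C_k^{(n-1)/2}(1) = (|Sⁿ|/d_k(n)) Σ_i Y_k^i(ξ) conj (Y_k^i(η))`
for any orthonormal basis `Y_k^1, …, Y_k^{d_k(n)}` of the degree-`k` spherical harmonics,
with respect to the Lebesgue surface measure `σ` on the unit sphere. -/
theorem spherical_harmonics_addition_theorem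
    (n k : ℕ) (hn : 2 ≤ n)
    (σ : Measure (Metric.sphere (0 : EuclideanSpace ℝ (Fin (n + 1))) 1))
    (hσ : σ = (volume : Measure (EuclideanSpace ℝ (Fin (n + 1)))).toSphere)
    (Y : Fin (harmonicDim n k) → EuclideanSpace ℝ (Fin (n + 1)) → ℂ)
    (hY : ∀ i, IsSphericalHarmonic n k (Y i))
    (hortho : ∀ i j, (∫ ξ : Metric.sphere (0 : EuclideanSpace ℝ (Fin (n + 1))) 1,
        Y i ξ * (starRingEnd ℂ) (Y j ξ) ∂σ) = if i = j then 1 else 0)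
    (ξ η : Metric.sphere (0 : EuclideanSpace ℝ (Fin (n + 1))) 1) :
    (((gegenbauer (((n : ℝ) - 1) / 2) k).eval ⟪(ξ : EuclideanSpace ℝ (Fin (n + 1))), (η : EuclideanSpace ℝ (Fin (n + 1)))⟫
        / (gegenbauer (((n : ℝ) - 1) / 2) k).eval 1 : ℝ) : ℂ)
      = (((σ Set.univ).toReal / (harmonicDim n k : ℝ)) : ℂ)
          * ∑ i, Y i ξ * (starRingEnd ℂ) (Y i η) := by
  subst hσ
  simp only [isSphericalHarmonic_iff] at hY
  choose p p_harmonic Y_eq using hY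
  have orthonormal : IsSphereOrthonormal p := fun i j => by
    simpa only [sphereIntegral_apply, map_mul, Y_eq, evalReal_map_conj] using hortho i j
  have spanning : Module.finrank ℂ (harmonicSubmodule (Fin (n + 1)) ℂ k) ≤
      Fintype.card (Fin (harmonicDim n k)) := by
    simpa using finrank_harmonicSubmodule_fin_le (by omega) k
  have addition := eval_gegenbauer_inner_mul_card (lam := ((n : ℝ) - 1) / 2)
    (by rw [Fintype.card_fin]; push_cast; ring) p_harmonic orthonormal spanning ξ η
  have hn' : (2 : ℝ) ≤ n := by exact_mod_cast hn
  have gegenbauer_ne_zero := Complex.ofReal_ne_zero.2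
    (eval_one_gegenbauer_pos (lam := ((n : ℝ) - 1) / 2) (by linarith) k).ne'
  have dim_ne_zero := (harmonicDim_pos (n := n) (by omega) k).ne'
  rw [Fintype.card_fin, Measure.real] at addition
  simp only [Y_eq, Complex.ofReal_div, Complex.ofReal_natCast]
  field_simp
  rw [addition, mul_assoc]

end
end

section
/- Zonal averaging: for all ξ ∈ Sⁿ, k ∈ ℕ₀, and any spherical harmonic Y of degree k, ∫_{SO(n)} Y(Bξ) dB = (Y(ξ₀) / C_k^{(n-1)/2}(1)) · C_k^{(n-1)/2}(ξ₀ᵀξ), where SO(n) is identified with the stabilizer of the north pole ξ₀ in SO(n+1) and dB is its normalized Haar measure. -/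
open MeasureTheory Matrix

noncomputable section

/-- `Y : (Fin (n+1) → ℝ) → ℂ` is (the extension of) a spherical harmonic of degree `k`
on `Sⁿ`: it is given by a harmonic polynomial, homogeneous of degree `k`. -/
def IsSphericalHarmonic' (n k : ℕ) (Y : (Fin (n + 1) → ℝ) → ℂ) : Prop :=
  ∃ P : MvPolynomial (Fin (n + 1)) ℂ,
    P.IsHomogeneous k ∧
    (∑ i, MvPolynomial.pderiv i (MvPolynomial.pderiv i P)) = 0 ∧
    ∀ x : Fin (n + 1) → ℝ, Y x = MvPolynomial.eval (fun i => (x i : ℂ)) P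

/-- The copy of `SO(n)` inside `SO(n+1)`: the subgroup of the orthogonal group of
determinant-one matrices stabilising the north pole `ξ₀`. -/
def soStabilizer (m : ℕ) (ξ₀ : Fin m → ℝ) : Subgroup (Matrix.orthogonalGroup (Fin m) ℝ) where
  carrier := {A | (A : Matrix (Fin m) (Fin m) ℝ).det = 1 ∧
    (A : Matrix (Fin m) (Fin m) ℝ).mulVec ξ₀ = ξ₀}
  one_mem' := by
    constructor
    · simp
    · simp [Matrix.one_mulVec]
  mul_mem' := by
    rintro a b ⟨ha1, ha2⟩ ⟨hb1, hb2⟩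
    constructor
    · simp [Matrix.UnitaryGroup.mul_val, Matrix.det_mul, ha1, hb1]
    · rw [Matrix.UnitaryGroup.mul_val, ← Matrix.mulVec_mulVec, hb2, ha2]
  inv_mem' := by
    rintro a ⟨ha1, ha2⟩
    constructor
    · rw [Matrix.UnitaryGroup.inv_val]
      calc (star a.1).det = star a.1.det := by
            rw [Matrix.star_eq_conjTranspose, Matrix.det_conjTranspose]
        _ = 1 := by rw [ha1]; exact star_one ℝ
    · rw [Matrix.UnitaryGroup.inv_val]
      conv_lhs => rw [← ha2]
      rw [Matrix.mulVec_mulVec, a.2.1, Matrix.one_mulVec]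

/-!
The average `I` over the stabilizer of the pole `z` annihilates every rotation field fixing `z`,
since it is invariant under the flow of that field. On the hyperplane `zᗮ`, the Casimir identity
writes `r² Δ - E (E + d - 2)` through rotation fields, where `r²`, `Δ` and `E` are the squared norm,
Laplacian and Euler field of `zᗮ`. For a homogeneous harmonic polynomial `P` all three are
expressed by the axial coordinate and the axial derivative `D`, so applying `I` gives a linear
relation between `I P`, `I (D P)` and `I (D² P)`. Since `D P` and `D² P` are again homogeneous and
harmonic, this is the three-term recurrence of the Gegenbauer polynomials normalized at `1`.
-/

section Gegenbauer

theorem gegenbauer_eval_add_two (lam s : ℝ) (k : ℕ) :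
    ((k : ℝ) + 2) * (gegenbauer lam (k + 2)).eval s
      = 2 * ((k : ℝ) + 1 + lam) * s * (gegenbauer lam (k + 1)).eval s
        - ((k : ℝ) + 2 * lam) * (gegenbauer lam k).eval s := by
  have hk : (k : ℝ) + 2 ≠ 0 := by positivity
  rw [gegenbauer]
  simp only [Polynomial.eval_sub, Polynomial.eval_mul, Polynomial.eval_C, Polynomial.eval_X]
  field_simp

theorem gegenbauer_eval_one_succ (lam : ℝ) (k : ℕ) :
    ((k : ℝ) + 1) * (gegenbauer lam (k + 1)).eval 1
      = ((k : ℝ) + 2 * lam) * (gegenbauer lam k).eval 1 := by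
  induction k with
  | zero => simp [gegenbauer]
  | succ k ih =>
    push_cast
    linear_combination gegenbauer_eval_add_two lam 1 k + ih

theorem gegenbauer_eval_one_pos {lam : ℝ} (hlam : 0 < lam) (k : ℕ) :
    0 < (gegenbauer lam k).eval 1 := by
  induction k with
  | zero => simp [gegenbauer]
  | succ k ih =>
    have hprod : 0 < ((k : ℝ) + 1) * (gegenbauer lam (k + 1)).eval 1 := by
      rw [gegenbauer_eval_one_succ]
      positivity
    exact pos_of_mul_pos_right hprod (by positivity)

/-- The Gegenbauer polynomial rescaled to take the value `1` at `1`, as a function; the junk value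
`0` occurs when `C_k^λ(1) = 0`, which is excluded for `0 < λ`. -/
def normalizedGegenbauer (lam : ℝ) (k : ℕ) (s : ℝ) : ℝ :=
  (gegenbauer lam k).eval s / (gegenbauer lam k).eval 1

theorem normalizedGegenbauer_zero (lam s : ℝ) : normalizedGegenbauer lam 0 s = 1 := by
  simp [normalizedGegenbauer, gegenbauer]

theorem normalizedGegenbauer_succ {lam : ℝ} (hlam : 0 < lam) (k : ℕ) (s : ℝ) :
    ((k : ℝ) + 2 * lam) * normalizedGegenbauer lam (k + 1) s
      = 2 * ((k : ℝ) + lam) * s * normalizedGegenbauer lam k s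
        - k * normalizedGegenbauer lam (k - 1) s := by
  cases k with
  | zero =>
    have hlam' := hlam.ne'
    simp only [normalizedGegenbauer, gegenbauer, Polynomial.eval_mul, Polynomial.eval_C,
      Polynomial.eval_X, Polynomial.eval_one]
    field_simp
    ring
  | succ k =>
    have h₀ := (gegenbauer_eval_one_pos hlam k).ne'
    have h₁ := (gegenbauer_eval_one_pos hlam (k + 1)).ne'
    have h₂ := (gegenbauer_eval_one_pos hlam (k + 2)).ne'
    have hval₁ := gegenbauer_eval_one_succ lam k
    have hval₂ := gegenbauer_eval_one_succ lam (k + 1)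
    have hrec := gegenbauer_eval_add_two lam s k
    push_cast at hval₂
    have hnext : ((k : ℝ) + 1 + 2 * lam) * normalizedGegenbauer lam (k + 2) s
        = (k + 2) * (gegenbauer lam (k + 2)).eval s / (gegenbauer lam (k + 1)).eval 1 := by
      rw [normalizedGegenbauer, ← mul_div_assoc, div_eq_div_iff h₂ h₁]
      linear_combination -(gegenbauer lam (k + 2)).eval s * hval₂
    have hprev : ((k : ℝ) + 1) * normalizedGegenbauer lam k s
        = (k + 2 * lam) * (gegenbauer lam k).eval s / (gegenbauer lam (k + 1)).eval 1 := by
      rw [normalizedGegenbauer, ← mul_div_assoc, div_eq_div_iff h₀ h₁]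
      linear_combination (gegenbauer lam k).eval s * hval₁
    simp only [Nat.add_sub_cancel]
    push_cast
    rw [hnext, hprev, hrec, normalizedGegenbauer]
    ring

end Gegenbauer

section RotationFields

variable {ι R A : Type*} [CommRing R] [CommRing A] [Algebra R A]

theorem derivation_sum_apply (s : Finset ι) (D : ι → Derivation R A A) (a : A) :
    (∑ i ∈ s, D i) a = ∑ i ∈ s, D i a :=
  (congrFun (map_sum Derivation.coeFnAddMonoidHom D s) a).trans (Finset.sum_apply a s _)

/-- The rotation vector field `xᵢ ∂ⱼ - xⱼ ∂ᵢ` attached to coordinates `x` and derivations `δ`. -/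
def rotationField (x : ι → A) (δ : ι → Derivation R A A) (i j : ι) : Derivation R A A :=
  x i • δ j - x j • δ i

/-- The Euler vector field `∑ᵢ xᵢ ∂ᵢ` attached to coordinates `x` and derivations `δ`. -/
def eulerField [Fintype ι] (x : ι → A) (δ : ι → Derivation R A A) : Derivation R A A :=
  ∑ i, x i • δ i

theorem eulerField_apply [Fintype ι] (x : ι → A) (δ : ι → Derivation R A A) (a : A) :
    eulerField x δ a = ∑ i, x i * δ i a := by
  simp [eulerField, derivation_sum_apply]

/-- The Casimir identity. The coordinates need not be linearly independent: the hypotheses hold for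
the coordinates along any Parseval frame. -/
theorem sum_rotationField_apply [Fintype ι] (x : ι → A) (δ : ι → Derivation R A A) (d : R)
    (htrace : ∑ i, δ i (x i) = algebraMap R A d)
    (hgrad : ∀ j, ∑ i, x i * δ j (x i) = x j) (heuler : ∀ j, eulerField x δ (x j) = x j) (a : A) :
    ∑ i, ∑ j, rotationField x δ i j (x i * δ j a)
      = (∑ i, x i * x i) * (∑ j, δ j (δ j a))
        - (eulerField x δ (eulerField x δ a) + (d - 2) • eulerField x δ a) := by
  have hexpand : ∀ i j, rotationField x δ i j (x i * δ j a)
      = x i * δ j (x i) * δ j a + x i * x i * δ j (δ j a)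
        - δ i (x i) * (x j * δ j a) - x j * (x i * δ i (δ j a)) := fun i j => by
    simp only [rotationField, Derivation.sub_apply, Derivation.smul_apply, Derivation.leibniz,
      smul_eq_mul]
    ring
  have heuler_twice : eulerField x δ (eulerField x δ a)
      = ∑ j, x j * ∑ i, x i * δ i (δ j a) + eulerField x δ a := by
    conv_lhs => rw [eulerField_apply x δ a]
    simp only [map_sum, Derivation.leibniz, smul_eq_mul, heuler, Finset.sum_add_distrib]
    simp only [eulerField_apply, mul_comm (δ _ a)]
  have hgrad_sum : ∑ i, ∑ j, x i * δ j (x i) * δ j a = eulerField x δ a := by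
    rw [Finset.sum_comm, eulerField_apply]
    simp only [← Finset.sum_mul, hgrad]
  simp only [hexpand, Finset.sum_add_distrib, Finset.sum_sub_distrib, hgrad_sum]
  rw [← Finset.sum_mul_sum, ← Finset.sum_mul_sum, htrace, ← eulerField_apply, Finset.sum_comm,
    heuler_twice, Algebra.smul_def]
  simp only [← Finset.mul_sum, map_sub, map_ofNat]
  ring

end RotationFields

section ConstantCoefficients

open MvPolynomial

variable {σ R : Type*} [Fintype σ] [CommRing R]

/-- The linear form `x ↦ v ⬝ᵥ x` as a polynomial. -/
def linearForm : (σ → R) →ₗ[R] MvPolynomial σ R :=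
  Fintype.linearCombination R X

/-- The derivative of polynomials in the constant direction `v`. -/
def directionalDeriv : (σ → R) →ₗ[R] Derivation R (MvPolynomial σ R) (MvPolynomial σ R) :=
  Fintype.linearCombination R pderiv

theorem linearForm_apply (v : σ → R) : linearForm v = ∑ i, C (v i) * X i := by
  simp [linearForm, Fintype.linearCombination_apply, smul_eq_C_mul]

theorem directionalDeriv_apply (v : σ → R) (P : MvPolynomial σ R) :
    directionalDeriv v P = ∑ i, v i • pderiv i P := by
  simp [directionalDeriv, Fintype.linearCombination_apply, derivation_sum_apply]

theorem eval_linearForm (v x : σ → R) : eval x (linearForm v) = v ⬝ᵥ x := by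
  simp [linearForm_apply, dotProduct]

theorem directionalDeriv_X (v : σ → R) (i : σ) : directionalDeriv v (X i) = C (v i) := by
  classical
  simp [directionalDeriv_apply, Pi.single_apply, smul_eq_C_mul]

theorem directionalDeriv_linearForm (v w : σ → R) :
    directionalDeriv v (linearForm w) = C (v ⬝ᵥ w) := by
  simp [linearForm_apply, directionalDeriv_X, dotProduct, mul_comm]

theorem directionalDeriv_pderiv_comm (v : σ → R) (i : σ) (P : MvPolynomial σ R) :
    directionalDeriv v (pderiv i P) = pderiv i (directionalDeriv v P) := by
  classical
  have hcomm : ⁅directionalDeriv v, (pderiv i : Derivation R _ (MvPolynomial σ R))⁆ = 0 :=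
    derivation_ext fun j => by
      simp [Derivation.commutator_apply, directionalDeriv_X, Pi.single_apply, apply_ite]
  rw [← sub_eq_zero, ← Derivation.commutator_apply, hcomm, Derivation.zero_apply]

theorem sum_pderiv_pderiv_directionalDeriv_eq_zero (v : σ → R) {P : MvPolynomial σ R}
    (hP : ∑ i, pderiv i (pderiv i P) = 0) :
    ∑ i, pderiv i (pderiv i (directionalDeriv v P)) = 0 := by
  simp only [← directionalDeriv_pderiv_comm, ← map_sum, hP, map_zero]

theorem isHomogeneous_directionalDeriv (v : σ → R) {k : ℕ} {P : MvPolynomial σ R}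
    (hP : P.IsHomogeneous k) : (directionalDeriv v P).IsHomogeneous (k - 1) := by
  rw [directionalDeriv_apply]
  exact IsHomogeneous.sum _ _ _ fun i _ =>
    (homogeneousSubmodule σ R (k - 1)).smul_mem (v i) hP.pderiv

theorem eval_directionalDeriv_self (v : σ → R) {k : ℕ} {P : MvPolynomial σ R}
    (hP : P.IsHomogeneous k) : eval v (directionalDeriv v P) = k * eval v P := by
  simpa [directionalDeriv_apply, smul_eval] using congrArg (eval v) hP.sum_X_mul_pderiv

theorem directionalDeriv_single [DecidableEq σ] (i : σ) :
    directionalDeriv (Pi.single i (1 : R)) = pderiv i := by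
  simp [directionalDeriv]

theorem linearForm_single [DecidableEq σ] (i : σ) :
    linearForm (Pi.single i (1 : R)) = X i := by
  simp [linearForm]

/-- The linear vector field `x ↦ A *ᵥ x`, acting on polynomials. -/
def linearField (A : Matrix σ σ R) : Derivation R (MvPolynomial σ R) (MvPolynomial σ R) :=
  mkDerivation R fun i => linearForm (A i)

theorem linearField_X (A : Matrix σ σ R) (i : σ) : linearField A (X i) = linearForm (A i) :=
  mkDerivation_X R _ i

end ConstantCoefficients

section AxialProjection

open MvPolynomial

variable {σ R : Type*} [DecidableEq σ] [CommRing R]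

/-- The component of the `i`-th basis vector orthogonal to the unit vector `z`. Over `ℝ` these
vectors form a Parseval frame of the hyperplane `zᗮ`, which spares us choosing a basis of it. -/
def axialProj (z : σ → R) (i : σ) : σ → R :=
  Pi.single i 1 - z i • z

/-- The skew-symmetric matrix generating the rotation in the plane spanned by `axialProj z i` and
`axialProj z j`. -/
def axialGenerator (z : σ → R) (i j : σ) : Matrix σ σ R :=
  vecMulVec (axialProj z j) (axialProj z i) - vecMulVec (axialProj z i) (axialProj z j)

theorem axialGenerator_transpose (z : σ → R) (i j : σ) :
    (axialGenerator z i j)ᵀ = -axialGenerator z i j := by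
  simp [axialGenerator, transpose_vecMulVec]

theorem axialGenerator_map {S : Type*} [CommRing S] (f : R →+* S) (z : σ → R) (i j : σ) :
    (axialGenerator z i j).map f = axialGenerator (f ∘ z) i j := by
  ext a b
  simp [axialGenerator, axialProj, vecMulVec_apply, Pi.single_apply, apply_ite f]

variable [Fintype σ]

theorem axialProj_dotProduct_axis {z : σ → R} (hz : z ⬝ᵥ z = 1) (i : σ) :
    axialProj z i ⬝ᵥ z = 0 := by
  simp [axialProj, sub_dotProduct, hz]

theorem axialGenerator_mulVec_axis {z : σ → R} (hz : z ⬝ᵥ z = 1) (i j : σ) :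
    axialGenerator z i j *ᵥ z = 0 := by
  simp [axialGenerator, sub_mulVec, vecMulVec_mulVec, axialProj_dotProduct_axis hz]

theorem sum_bilin_axialProj {M : Type*} [AddCommGroup M] [Module R M] {z : σ → R}
    (hz : z ⬝ᵥ z = 1) (B : (σ → R) →ₗ[R] (σ → R) →ₗ[R] M) :
    ∑ i, B (axialProj z i) (axialProj z i)
      = ∑ i, B (Pi.single i 1) (Pi.single i 1) - B z z := by
  have hexpand : ∀ f : (σ → R) →ₗ[R] M, ∑ i, z i • f (Pi.single i 1) = f z := fun f => by
    conv_rhs => rw [pi_eq_sum_univ' z, map_sum]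
    simp only [map_smul]
  have hzz : ∑ i, z i • z i • B z z = B z z := by
    simp only [smul_smul, ← Finset.sum_smul]
    rw [← dotProduct, hz, one_smul]
  simp only [axialProj, map_sub, map_smul, LinearMap.sub_apply, LinearMap.smul_apply,
    smul_sub, Finset.sum_sub_distrib, hexpand (B z), hzz]
  rw [show ∑ i, z i • B (Pi.single i 1) z = B z z from hexpand (B.flip z)]
  abel

theorem sum_dotProduct_self_axialProj {z : σ → R} (hz : z ⬝ᵥ z = 1) :
    ∑ i, axialProj z i ⬝ᵥ axialProj z i = Fintype.card σ - 1 := by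
  have h := sum_bilin_axialProj hz (dotProductBilin R R)
  simpa [hz] using h

theorem sum_dotProduct_smul_axialProj {z : σ → R} (hz : z ⬝ᵥ z = 1) (v : σ → R) :
    ∑ i, (axialProj z i ⬝ᵥ v) • axialProj z i = v - (z ⬝ᵥ v) • z := by
  have h := sum_bilin_axialProj hz ((LinearMap.lsmul R (σ → R)).comp ((dotProductBilin R R).flip v))
  simp only [LinearMap.comp_apply, LinearMap.flip_apply, LinearMap.lsmul_apply,
    dotProductBilin_apply_apply] at h
  rw [h]
  congr 1
  simpa using (pi_eq_sum_univ' v).symm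

theorem sum_linearForm_sq_axialProj {z : σ → R} (hz : z ⬝ᵥ z = 1) :
    ∑ i, linearForm (axialProj z i) * linearForm (axialProj z i)
      = ∑ i, X i * X i - linearForm z * linearForm z := by
  have h := sum_bilin_axialProj hz
    ((LinearMap.mul R (MvPolynomial σ R)).compl₁₂ linearForm linearForm)
  simpa [linearForm_single] using h

/-- The rotations of the hyperplane orthogonal to `z`, extended by fixing `z`; they are indexed by
pairs of vectors of the Parseval frame `axialProj z`. -/
def axialRotation (z : σ → R) : σ → σ → Derivation R (MvPolynomial σ R) (MvPolynomial σ R) :=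
  rotationField (fun i => linearForm (axialProj z i)) (fun i => directionalDeriv (axialProj z i))

theorem linearField_axialGenerator (z : σ → R) (i j : σ) :
    linearField (axialGenerator z i j) = axialRotation z i j := by
  refine derivation_ext fun l => ?_
  have hrow : axialGenerator z i j l
      = axialProj z j l • axialProj z i - axialProj z i l • axialProj z j := rfl
  simp only [linearField_X, hrow, axialRotation, rotationField, map_sub, map_smul,
    Derivation.sub_apply, Derivation.smul_apply, directionalDeriv_X, smul_eq_mul, smul_eq_C_mul,
    mul_comm]

/-- The Euler field of the hyperplane orthogonal to `z`. -/
def axialEuler (z : σ → R) : Derivation R (MvPolynomial σ R) (MvPolynomial σ R) :=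
  eulerField (fun i => linearForm (axialProj z i)) (fun i => directionalDeriv (axialProj z i))

theorem axialEuler_apply {z : σ → R} (hz : z ⬝ᵥ z = 1) (P : MvPolynomial σ R) :
    axialEuler z P = ∑ i, X i * pderiv i P - linearForm z * directionalDeriv z P := by
  have h := sum_bilin_axialProj hz (LinearMap.mk₂ R
    (fun v w : σ → R => linearForm v * directionalDeriv w P)
    (by simp [add_mul]) (by simp) (by simp [mul_add]) (by simp))
  simpa [axialEuler, eulerField_apply, linearForm_single, directionalDeriv_single] using h

theorem sum_directionalDeriv_sq_axialProj {z : σ → R} (hz : z ⬝ᵥ z = 1) (P : MvPolynomial σ R) :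
    ∑ i, directionalDeriv (axialProj z i) (directionalDeriv (axialProj z i) P)
      = ∑ i, pderiv i (pderiv i P) - directionalDeriv z (directionalDeriv z P) := by
  have h := sum_bilin_axialProj hz (LinearMap.mk₂ R
    (fun v w : σ → R => directionalDeriv v (directionalDeriv w P))
    (by simp) (by simp) (by simp) (by simp))
  simpa [directionalDeriv_single] using h

theorem axialEuler_of_isHomogeneous {z : σ → R} (hz : z ⬝ᵥ z = 1) {k : ℕ} {P : MvPolynomial σ R}
    (hP : P.IsHomogeneous k) :
    axialEuler z P = k • P - linearForm z * directionalDeriv z P := by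
  rw [axialEuler_apply hz, hP.sum_X_mul_pderiv]

theorem axialEuler_linearForm {z : σ → R} (hz : z ⬝ᵥ z = 1) (v : σ → R) :
    axialEuler z (linearForm v) = linearForm (v - (z ⬝ᵥ v) • z) := by
  rw [← sum_dotProduct_smul_axialProj hz, map_sum, axialEuler, eulerField_apply]
  simp only [directionalDeriv_linearForm, map_smul, smul_eq_C_mul, mul_comm]

theorem sum_axialRotation_apply {z : σ → R} (hz : z ⬝ᵥ z = 1) (P : MvPolynomial σ R) :
    ∑ i, ∑ j, axialRotation z i j (linearForm (axialProj z i) * directionalDeriv (axialProj z j) P)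
      = (∑ i, X i * X i - linearForm z * linearForm z)
          * (∑ i, pderiv i (pderiv i P) - directionalDeriv z (directionalDeriv z P))
        - (axialEuler z (axialEuler z P) + ((Fintype.card σ : R) - 3) • axialEuler z P) := by
  have hperp : ∀ j, z ⬝ᵥ axialProj z j = 0 := fun j => by
    rw [dotProduct_comm, axialProj_dotProduct_axis hz]
  have heuler : ∀ j, axialEuler z (linearForm (axialProj z j)) = linearForm (axialProj z j) :=
    fun j => by rw [axialEuler_linearForm hz, hperp, zero_smul, sub_zero]
  have htrace : ∑ i, directionalDeriv (axialProj z i) (linearForm (axialProj z i))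
      = algebraMap R (MvPolynomial σ R) (Fintype.card σ - 1) := by
    simp only [directionalDeriv_linearForm, ← map_sum, sum_dotProduct_self_axialProj hz,
      algebraMap_eq]
  have hgrad : ∀ j, ∑ i, linearForm (axialProj z i)
      * directionalDeriv (axialProj z j) (linearForm (axialProj z i))
      = linearForm (axialProj z j) := fun j => by
    refine Eq.trans ?_ (heuler j)
    simp only [axialEuler, eulerField_apply, directionalDeriv_linearForm,
      dotProduct_comm (axialProj z j)]
  have h := sum_rotationField_apply _ _ _ htrace hgrad heuler P
  rw [sum_linearForm_sq_axialProj hz, sum_directionalDeriv_sq_axialProj hz,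
    show (Fintype.card σ : R) - 1 - 2 = Fintype.card σ - 3 by ring] at h
  exact h

theorem axialEuler_axialEuler {z : σ → R} (hz : z ⬝ᵥ z = 1) {m : ℕ} {P : MvPolynomial σ R}
    (hP : P.IsHomogeneous (m + 1)) :
    axialEuler z (axialEuler z P)
      = (m + 1) • axialEuler z P - linearForm z * axialEuler z (directionalDeriv z P) := by
  have haxis : axialEuler z (linearForm z) = 0 := by simp [axialEuler_linearForm hz, hz]
  conv_lhs => rw [axialEuler_of_isHomogeneous hz hP]
  simp only [map_sub, map_nsmul, Derivation.leibniz, haxis, mul_zero, add_zero, smul_eq_mul]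

end AxialProjection

section ZonalFunctional

open MvPolynomial

variable {σ R : Type*} [Fintype σ] [DecidableEq σ] [CommRing R]

/-- Linear functionals behaving like the average of a polynomial over the latitude sphere
`{x | x ⬝ᵥ x = 1 ∧ z ⬝ᵥ x = t}` around the axis `z`. -/
structure IsZonalFunctional (z : σ → R) (t : R) (I : MvPolynomial σ R →ₗ[R] R) : Prop where
  map_one : I 1 = 1
  map_axis_mul : ∀ P, I (linearForm z * P) = t * I P
  map_normSq_mul : ∀ P, I ((∑ i, X i * X i) * P) = I P
  map_axialRotation : ∀ i j P, I (axialRotation z i j P) = 0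

namespace IsZonalFunctional

theorem harmonic_recurrence {z : σ → R} {t : R} {I : MvPolynomial σ R →ₗ[R] R}
    (hI : IsZonalFunctional z t I) (hz : z ⬝ᵥ z = 1) {m : ℕ} {P : MvPolynomial σ R}
    (hP : P.IsHomogeneous (m + 1)) (hharm : ∑ i, pderiv i (pderiv i P) = 0) :
    ((m : R) + 1) * (m + Fintype.card σ - 2) * I P
      = (2 * m + Fintype.card σ - 2) * t * I (directionalDeriv z P)
        - I (directionalDeriv z (directionalDeriv z P)) := by
  have hcasimir := congrArg I (sum_axialRotation_apply hz P)
  rw [axialEuler_axialEuler hz hP, hharm, zero_sub,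
    axialEuler_of_isHomogeneous hz (isHomogeneous_directionalDeriv z hP),
    axialEuler_of_isHomogeneous hz hP] at hcasimir
  simp only [map_sum, hI.map_axialRotation, Finset.sum_const_zero, sub_mul, mul_sub, mul_neg,
    map_sub, map_add, map_neg, map_smul, map_nsmul, mul_assoc, mul_smul_comm, smul_sub,
    hI.map_axis_mul, hI.map_normSq_mul, smul_eq_mul] at hcasimir
  simp only [nsmul_eq_mul] at hcasimir
  push_cast at hcasimir
  linear_combination hcasimir

theorem apply_of_harmonic {z : σ → ℂ} {t : ℝ} {I : MvPolynomial σ ℂ →ₗ[ℂ] ℂ}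
    (hI : IsZonalFunctional z t I) (hz : z ⬝ᵥ z = 1) (hcard : 2 < Fintype.card σ) {k : ℕ}
    {P : MvPolynomial σ ℂ} (hP : P.IsHomogeneous k) (hharm : ∑ i, pderiv i (pderiv i P) = 0) :
    I P = eval z P * normalizedGegenbauer (((Fintype.card σ : ℝ) - 2) / 2) k t := by
  induction k using Nat.strong_induction_on generalizing P with
  | _ k ih =>
  cases k with
  | zero =>
    obtain ⟨c, rfl⟩ : ∃ c, P = C c :=
      ⟨_, totalDegree_eq_zero_iff_eq_C.mp (Nat.le_zero.mp hP.totalDegree_le)⟩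
    rw [← mul_one (C c), ← smul_eq_C_mul, map_smul, hI.map_one, normalizedGegenbauer_zero]
    simp
  | succ m =>
    have hP₁ := isHomogeneous_directionalDeriv z hP
    have hP₂ := isHomogeneous_directionalDeriv z hP₁
    have hharm₁ := sum_pderiv_pderiv_directionalDeriv_eq_zero z hharm
    have hharm₂ := sum_pderiv_pderiv_directionalDeriv_eq_zero z hharm₁
    have hrec := hI.harmonic_recurrence hz hP hharm
    have hcard' : (2 : ℝ) < Fintype.card σ := by exact_mod_cast hcard
    have hlam : 0 < ((Fintype.card σ : ℝ) - 2) / 2 := by linarith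
    have hgeg := congrArg ((↑) : ℝ → ℂ) (normalizedGegenbauer_succ hlam m t)
    rw [ih _ (by omega) hP₁ hharm₁, ih _ (by omega) hP₂ hharm₂, eval_directionalDeriv_self z hP₁,
      eval_directionalDeriv_self z hP] at hrec
    simp only [Nat.add_sub_cancel] at hrec
    have hne : ((m : ℂ) + 1) * (m + Fintype.card σ - 2) ≠ 0 := by
      have hpos : 0 < ((m : ℝ) + 1) * (m + Fintype.card σ - 2) :=
        mul_pos (by positivity) (by linarith [m.cast_nonneg (α := ℝ)])
      exact_mod_cast hpos.ne'
    push_cast at hgeg hrec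
    apply mul_left_cancel₀ hne
    linear_combination hrec - (m + 1) * eval z P * hgeg

end IsZonalFunctional

end ZonalFunctional
section MatrixExponential

open scoped Matrix.Norms.Operator

variable {σ : Type*} [Fintype σ] [DecidableEq σ]

theorem hasDerivAt_exp_smul_mulVec {𝕜 : Type*} [RCLike 𝕜] (A : Matrix σ σ 𝕜) (v : σ → 𝕜) (t : 𝕜) :
    HasDerivAt (fun u : 𝕜 => NormedSpace.exp (u • A) *ᵥ v)
      (A *ᵥ NormedSpace.exp (t • A) *ᵥ v) t := by
  rw [mulVec_mulVec]
  exact ((mulVecBilin 𝕜 𝕜).flip v).toContinuousLinearMap.hasFDerivAt.comp_hasDerivAt t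
    (hasDerivAt_exp_smul_const' (𝕂 := 𝕜) A t)

theorem exp_mulVec_of_mulVec_eq_zero {𝕜 : Type*} [RCLike 𝕜] {A : Matrix σ σ 𝕜} {v : σ → 𝕜}
    (hv : A *ᵥ v = 0) : NormedSpace.exp A *ᵥ v = v := by
  have hderiv : ∀ t : 𝕜, HasDerivAt (fun u : 𝕜 => NormedSpace.exp (u • A) *ᵥ v) 0 t := fun t => by
    have hcomm : Commute A (NormedSpace.exp (t • A)) :=
      ((Commute.refl A).smul_right t).exp_right
    simpa [mulVec_mulVec, hcomm.eq, ← mulVec_mulVec _ _ A, hv] using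
      hasDerivAt_exp_smul_mulVec A v t
  simpa using is_const_of_deriv_eq_zero (fun t => (hderiv t).differentiableAt)
    (fun t => (hderiv t).deriv) 1 0

theorem exp_mem_orthogonalGroup_of_transpose_eq_neg {A : Matrix σ σ ℝ} (hA : Aᵀ = -A) :
    NormedSpace.exp A ∈ orthogonalGroup σ ℝ := by
  rw [mem_orthogonalGroup_iff, ← exp_transpose, hA,
    ← exp_add_of_commute _ _ (Commute.refl A).neg_right, add_neg_cancel, NormedSpace.exp_zero]

theorem det_exp_of_transpose_eq_neg {A : Matrix σ σ ℝ} (hA : Aᵀ = -A) :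
    (NormedSpace.exp A).det = 1 := by
  have hhalf : ((1 / 2 : ℝ) • A)ᵀ = -((1 / 2 : ℝ) • A) := by rw [transpose_smul, hA, smul_neg]
  have hA_eq : A = 2 • ((1 / 2 : ℝ) • A) := by module
  have hdet := congrArg det
    ((mem_orthogonalGroup_iff _ _).mp (exp_mem_orthogonalGroup_of_transpose_eq_neg hhalf))
  rw [det_mul, det_transpose, det_one] at hdet
  rw [hA_eq, exp_nsmul, det_pow, pow_two, hdet]

end MatrixExponential

section PolynomialEvaluation

open MvPolynomial

variable {σ : Type*}

theorem hasDerivAt_eval {𝕜 𝔸 : Type*} [NontriviallyNormedField 𝕜] [NormedCommRing 𝔸]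
    [NormedAlgebra 𝕜 𝔸] (D : Derivation 𝔸 (MvPolynomial σ 𝔸) (MvPolynomial σ 𝔸))
    {γ : 𝕜 → σ → 𝔸} {t : 𝕜} (hγ : ∀ i, HasDerivAt (fun u => γ u i) (eval (γ t) (D (X i))) t)
    (Q : MvPolynomial σ 𝔸) :
    HasDerivAt (fun u => eval (γ u) Q) (eval (γ t) (D Q)) t := by
  induction Q using MvPolynomial.induction_on with
  | C a => simpa using hasDerivAt_const t a
  | add P Q hP hQ => simpa using hP.fun_add hQ
  | mul_X P i hP =>
    refine ((hP.fun_mul (hγ i)).congr_deriv ?_).congr_of_eventuallyEq (.of_forall fun u => ?_)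
    · simp only [Derivation.leibniz, smul_eq_mul, map_add, map_mul, eval_X]
      ring
    · simp

theorem hasDerivAt_eval_exp_mulVec [Fintype σ] [DecidableEq σ] (A : Matrix σ σ ℝ) (v : σ → ℝ)
    (Q : MvPolynomial σ ℂ) (t : ℝ) :
    HasDerivAt (fun u : ℝ => eval (Complex.ofRealHom ∘ (NormedSpace.exp (u • A) *ᵥ v)) Q)
      (eval (Complex.ofRealHom ∘ (NormedSpace.exp (t • A) *ᵥ v))
        (linearField (A.map Complex.ofRealHom) Q)) t := by
  refine hasDerivAt_eval _ (fun i => ?_) Q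
  rw [linearField_X, eval_linearForm, ← mulVec, ← RingHom.map_mulVec]
  exact (hasDerivAt_pi.mp (hasDerivAt_exp_smul_mulVec A v t) i).ofReal_comp

theorem continuous_eval_ofReal (Q : MvPolynomial σ ℂ) :
    Continuous fun x : σ → ℝ => eval (Complex.ofRealHom ∘ x) Q :=
  (MvPolynomial.continuous_eval Q).comp
    (continuous_pi fun i => Complex.continuous_ofReal.comp (continuous_apply i))

theorem exists_norm_eval_le_of_dotProduct_self_eq [Fintype σ] (Q : MvPolynomial σ ℂ) (r : ℝ) :
    ∃ K : ℝ, ∀ x : σ → ℝ, x ⬝ᵥ x = r → ‖eval (Complex.ofRealHom ∘ x) Q‖ ≤ K := by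
  obtain ⟨K, hK⟩ := (isCompact_closedBall (0 : σ → ℝ) (√r)).exists_bound_of_continuousOn
    (continuous_eval_ofReal Q).continuousOn
  refine ⟨K, fun x hx => hK x ?_⟩
  rw [mem_closedBall_zero_iff, pi_norm_le_iff_of_nonneg (Real.sqrt_nonneg r)]
  intro i
  refine Real.abs_le_sqrt ?_
  rw [← hx, pow_two]
  exact Finset.single_le_sum (f := fun i => x i * x i) (fun j _ => mul_self_nonneg (x j))
    (Finset.mem_univ i)

end PolynomialEvaluation

section ZonalMean

open MvPolynomial

theorem orthogonalGroup_mulVec_dotProduct_mulVec {σ R : Type*} [Fintype σ] [DecidableEq σ]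
    [CommRing R] (B : orthogonalGroup σ R) (x y : σ → R) :
    (B.1 *ᵥ x) ⬝ᵥ (B.1 *ᵥ y) = x ⬝ᵥ y := by
  rw [dotProduct_mulVec, vecMul_mulVec, ← dotProduct_mulVec, (mem_orthogonalGroup_iff' _ _).mp B.2,
    one_mulVec]

variable {m : ℕ} {ξ₀ : Fin m → ℝ}

theorem axis_dotProduct_mulVec (B : soStabilizer m ξ₀) (x : Fin m → ℝ) :
    ξ₀ ⬝ᵥ (B.1.1 *ᵥ x) = ξ₀ ⬝ᵥ x :=
  (congrArg (· ⬝ᵥ (B.1.1 *ᵥ x)) B.2.2).symm.trans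
    (orthogonalGroup_mulVec_dotProduct_mulVec B.1 ξ₀ x)

/-- The exponential of a skew-symmetric matrix annihilating `ξ₀`, as an element of the copy of
`SO(n)` fixing `ξ₀`. -/
def expSOStabilizer {A : Matrix (Fin m) (Fin m) ℝ} (hA : Aᵀ = -A) (hAξ₀ : A *ᵥ ξ₀ = 0) :
    soStabilizer m ξ₀ :=
  ⟨⟨NormedSpace.exp A, exp_mem_orthogonalGroup_of_transpose_eq_neg hA⟩,
    det_exp_of_transpose_eq_neg hA, exp_mulVec_of_mulVec_eq_zero hAξ₀⟩

variable [MeasurableSpace (soStabilizer m ξ₀)] [BorelSpace (soStabilizer m ξ₀)]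
  (ν : Measure (soStabilizer m ξ₀))

theorem integrable_eval_mulVec [IsFiniteMeasure ν] (x : Fin m → ℝ) (Q : MvPolynomial (Fin m) ℂ) :
    Integrable (fun B : soStabilizer m ξ₀ => eval (Complex.ofRealHom ∘ (B.1.1 *ᵥ x)) Q) ν := by
  obtain ⟨K, hK⟩ := exists_norm_eval_le_of_dotProduct_self_eq Q (x ⬝ᵥ x)
  have hcont : Continuous fun B : soStabilizer m ξ₀ => B.1.1 *ᵥ x :=
    (continuous_subtype_val.comp continuous_subtype_val).matrix_mulVec continuous_const
  exact .of_bound ((continuous_eval_ofReal Q).comp hcont).aestronglyMeasurable K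
    (.of_forall fun B => hK _ (orthogonalGroup_mulVec_dotProduct_mulVec B.1 x x))

/-- The integral of a polynomial along the orbit of `x` under the copy of `SO(n)` fixing `ξ₀`; it is
an average when `ν` is a probability measure. -/
def zonalMean [IsFiniteMeasure ν] (x : Fin m → ℝ) : MvPolynomial (Fin m) ℂ →ₗ[ℂ] ℂ where
  toFun Q := ∫ B : soStabilizer m ξ₀, eval (Complex.ofRealHom ∘ (B.1.1 *ᵥ x)) Q ∂ν
  map_add' P Q := by
    simp only [map_add]
    exact integral_add (integrable_eval_mulVec ν x P) (integrable_eval_mulVec ν x Q)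
  map_smul' c Q := by
    simp only [smul_eval, integral_const_mul, RingHom.id_apply, smul_eq_mul]

theorem zonalMean_apply [IsFiniteMeasure ν] (x : Fin m → ℝ) (Q : MvPolynomial (Fin m) ℂ) :
    zonalMean ν x Q = ∫ B : soStabilizer m ξ₀, eval (Complex.ofRealHom ∘ (B.1.1 *ᵥ x)) Q ∂ν :=
  rfl

/-- Left invariance makes the average of `Q` along the flow `exp (t • A)` constant in `t`; its
derivative at `t = 0` is the average of `linearField A Q`. -/
theorem zonalMean_linearField [IsFiniteMeasure ν] [ν.IsMulLeftInvariant]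
    {A : Matrix (Fin m) (Fin m) ℝ} (hA : Aᵀ = -A) (hAξ₀ : A *ᵥ ξ₀ = 0) (x : Fin m → ℝ)
    (Q : MvPolynomial (Fin m) ℂ) :
    zonalMean ν x (linearField (A.map Complex.ofRealHom) Q) = 0 := by
  let g : ℝ → soStabilizer m ξ₀ := fun t => expSOStabilizer (A := t • A)
    (by rw [transpose_smul, hA, smul_neg]) (by rw [smul_mulVec, hAξ₀, smul_zero])
  let F : MvPolynomial (Fin m) ℂ → soStabilizer m ξ₀ → ℂ := fun P B =>
    eval (Complex.ofRealHom ∘ (B.1.1 *ᵥ x)) P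
  let DQ := linearField (A.map Complex.ofRealHom) Q
  have hintegrable : ∀ P t, Integrable (fun B => F P (g t * B)) ν := fun P t =>
    (integrable_eval_mulVec ν x P).comp_mul_left (g t)
  have hinvariant : ∀ P t, ∫ B, F P (g t * B) ∂ν = zonalMean ν x P := fun P t =>
    integral_mul_left_eq_self (F P) (g t)
  have hflow : ∀ B t, HasDerivAt (fun u => F Q (g u * B)) (F DQ (g t * B)) t := fun B t => by
    have hmul : ∀ u, (g u * B).1.1 *ᵥ x = NormedSpace.exp (u • A) *ᵥ (B.1.1 *ᵥ x) := fun u =>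
      (mulVec_mulVec _ _ _).symm
    simp only [F, hmul]
    exact hasDerivAt_eval_exp_mulVec A (B.1.1 *ᵥ x) Q t
  obtain ⟨K, hK⟩ := exists_norm_eval_le_of_dotProduct_self_eq DQ (x ⬝ᵥ x)
  have hderiv := (hasDerivAt_integral_of_dominated_loc_of_deriv_le (μ := ν) (𝕜 := ℝ) (x₀ := 0)
    (F := fun t B => F Q (g t * B)) (F' := fun t B => F DQ (g t * B)) (bound := fun _ => K)
    Filter.univ_mem
    (.of_forall fun t => (hintegrable Q t).aestronglyMeasurable) (hintegrable Q 0)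
    (hintegrable DQ 0).aestronglyMeasurable
    (.of_forall fun B t _ => hK _ (orthogonalGroup_mulVec_dotProduct_mulVec (g t * B).1 x x))
    (integrable_const K) (.of_forall fun B t _ => hflow B t)).2
  simp only [hinvariant] at hderiv
  exact hderiv.unique (hasDerivAt_const 0 _)

theorem isZonalFunctional_zonalMean [IsProbabilityMeasure ν] [ν.IsMulLeftInvariant]
    (hξ₀ : ξ₀ ⬝ᵥ ξ₀ = 1) {x : Fin m → ℝ} (hx : x ⬝ᵥ x = 1) :
    IsZonalFunctional (Complex.ofRealHom ∘ ξ₀) ((ξ₀ ⬝ᵥ x : ℝ) : ℂ) (zonalMean ν x) where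
  map_one := by simp [zonalMean_apply]
  map_axis_mul P := by
    have haxis : ∀ B : soStabilizer m ξ₀,
        eval (Complex.ofRealHom ∘ (B.1.1 *ᵥ x)) (linearForm (Complex.ofRealHom ∘ ξ₀))
          = ((ξ₀ ⬝ᵥ x : ℝ) : ℂ) := fun B => by
      rw [eval_linearForm, ← RingHom.map_dotProduct, Complex.ofRealHom_eq_coe]
      exact congrArg _ (axis_dotProduct_mulVec B x)
    simp only [zonalMean_apply, map_mul, haxis, integral_const_mul]
  map_normSq_mul P := by
    have hsphere : ∀ B : soStabilizer m ξ₀,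
        eval (Complex.ofRealHom ∘ (B.1.1 *ᵥ x)) (∑ i, X i * X i) = 1 := fun B => by
      simp only [map_sum, map_mul, eval_X]
      rw [← dotProduct, ← RingHom.map_dotProduct, orthogonalGroup_mulVec_dotProduct_mulVec, hx,
        map_one]
    simp only [zonalMean_apply, map_mul, hsphere, one_mul]
  map_axialRotation i j P := by
    rw [← linearField_axialGenerator, ← axialGenerator_map]
    exact zonalMean_linearField ν (axialGenerator_transpose ξ₀ i j)
      (axialGenerator_mulVec_axis hξ₀ i j) x P

end ZonalMean

/-- Zonal averaging on `Sⁿ`: averaging a degree-`k` spherical harmonic over the copy of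
`SO(n)` stabilising the north pole `ξ₀` produces the zonal harmonic
`(Y(ξ₀)/C_k^{(n-1)/2}(1)) C_k^{(n-1)/2}(ξ₀ᵀξ)`. -/
theorem spherical_harmonic_zonal_average
    (n k : ℕ) (hn : 2 ≤ n) (ξ₀ : Fin (n + 1) → ℝ) (hξ₀ : ξ₀ ⬝ᵥ ξ₀ = 1)
    (Y : (Fin (n + 1) → ℝ) → ℂ) (hY : IsSphericalHarmonic' n k Y)
    [MeasurableSpace (soStabilizer (n + 1) ξ₀)]
    [BorelSpace (soStabilizer (n + 1) ξ₀)]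
    (ν : Measure (soStabilizer (n + 1) ξ₀)) [IsProbabilityMeasure ν]
    [ν.IsMulLeftInvariant] [ν.IsMulRightInvariant]
    (ξ : Fin (n + 1) → ℝ) (hξ : ξ ⬝ᵥ ξ = 1) :
    ∫ B : soStabilizer (n + 1) ξ₀,
        Y (((B : Matrix.orthogonalGroup (Fin (n + 1)) ℝ) :
            Matrix (Fin (n + 1)) (Fin (n + 1)) ℝ).mulVec ξ) ∂ν
      = (Y ξ₀ / ((gegenbauer (((n : ℝ) - 1) / 2) k).eval 1 : ℝ))
          * (((gegenbauer (((n : ℝ) - 1) / 2) k).eval (ξ₀ ⬝ᵥ ξ) : ℝ) : ℂ) := by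
  obtain ⟨P, hP, hharm, hYP⟩ := hY
  have hz : (Complex.ofRealHom ∘ ξ₀) ⬝ᵥ (Complex.ofRealHom ∘ ξ₀) = 1 := by
    rw [← RingHom.map_dotProduct, hξ₀, map_one]
  have hmean := (isZonalFunctional_zonalMean ν hξ₀ hξ).apply_of_harmonic hz
    (by rw [Fintype.card_fin]; omega) hP hharm
  have hparam : ((Fintype.card (Fin (n + 1)) : ℝ) - 2) / 2 = ((n : ℝ) - 1) / 2 := by
    rw [Fintype.card_fin]
    push_cast
    ring
  rw [hparam, normalizedGegenbauer, Complex.ofReal_div] at hmean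
  simp only [hYP]
  rw [div_mul_eq_mul_div, mul_div_assoc]
  exact hmean

end
end

section
/- For the group S³ of unit quaternions, the character of the (n+1)-dimensional irreducible representation t_n depends only on the scalar part: tr t_n(x) = C_n^1(x₀) where x₀ = Sc(x) is the real (scalar) part of the unit quaternion x; equivalently, tr t_n(x) = sin((n+1)θ)/sin(θ) when x₀ = cos θ. -/
open Matrix

noncomputable section

/-- The group `S³` of unit quaternions. -/
abbrev unitQuaternions := Metric.sphere (0 : Quaternion ℝ) 1

/-!
Multiplying a character `χ` by `2 Sc x`, the character of the spin representation, gives the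
character of a tensor product, and the integral of a character is the dimension of a space of fixed
vectors. By the recursion for the Chebyshev polynomials `U_k`, every `∫ χ(x) U_k(Sc x)` is therefore
an integer.

The functions `U_k(Sc x)` have unit norm in `L²(S³)`: invariance of Haar measure along the
one-parameter subgroups, combined with the differential equation of `U_k`, gives
`∫ U_k(Sc x) = 0` for `k ≠ 0`, and `U_k²` is the sum of the `U_{2i}` with `0 ≤ i ≤ k`.

Irreducibility gives `∫ χ² = 1`. Conjugacy classes are the level sets of `Sc`, so `χ` is a
continuous function of `Sc x` and cannot be orthogonal to all `U_k(Sc x)`. A nonzero integer inner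
product of two unit vectors is `±1`, with the vectors equal or opposite, so `χ = ± U_k(Sc x)` for
some `k`, and the value `n + 1` at the identity determines both the sign and `k`.
-/

open MeasureTheory Polynomial
open scoped Kronecker Matrix.Norms.Operator Quaternion

lemma integrable_of_continuous {X E : Type*} [TopologicalSpace X] [CompactSpace X]
    [MeasurableSpace X] [OpensMeasurableSpace X] [NormedAddCommGroup E] {μ : Measure X}
    [IsFiniteMeasure μ] {f : X → E} (hf : Continuous f) : Integrable f μ :=
  hf.integrable_of_hasCompactSupport (.of_compactSpace f)

lemma exists_isProbabilityMeasure_isHaarMeasure (G : Type*) [Group G] [TopologicalSpace G]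
    [IsTopologicalGroup G] [CompactSpace G] [MeasurableSpace G] [BorelSpace G] :
    ∃ μ : Measure G, IsProbabilityMeasure μ ∧ μ.IsHaarMeasure :=
  ⟨Measure.haarMeasure ⊤, ⟨Measure.haarMeasure_self⟩, inferInstance⟩

section Representation

variable {G : Type*} [Group G] {ι κ : Type*} [Fintype ι] [DecidableEq ι] [Fintype κ] [DecidableEq κ]

/-- The subspace of vectors fixed by a matrix representation `t`. -/
def fixedVectors (t : G →* Matrix ι ι ℂ) : Submodule ℂ (ι → ℂ) where
  carrier := {v | ∀ g, t g *ᵥ v = v}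
  add_mem' hv hw g := by rw [mulVec_add, hv g, hw g]
  zero_mem' _ := mulVec_zero _
  smul_mem' c v hv g := by rw [mulVec_smul, hv g]

/-- The tensor product of two matrix representations. -/
@[simps]
def kroneckerHom (s : G →* Matrix κ κ ℂ) (t : G →* Matrix ι ι ℂ) :
    G →* Matrix (κ × ι) (κ × ι) ℂ where
  toFun g := s g ⊗ₖ t g
  map_one' := by simp
  map_mul' g h := by simp [mul_kronecker_mul]

/-- The contragredient (dual) of a matrix representation. -/
@[simps]
def contragredient (t : G →* Matrix ι ι ℂ) : G →* Matrix ι ι ℂ where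
  toFun g := (t g⁻¹)ᵀ
  map_one' := by simp
  map_mul' g h := by simp [transpose_mul]

lemma trace_eq_of_isConj (t : G →* Matrix ι ι ℂ) {g h : G} (hconj : IsConj g h) :
    (t g).trace = (t h).trace := by
  obtain ⟨c, rfl⟩ := isConj_iff.1 hconj
  rw [map_mul, trace_mul_comm, ← map_mul, inv_mul_cancel_left]

lemma vec_mem_fixedVectors_kroneckerHom_contragredient (t : G →* Matrix ι ι ℂ) (A : Matrix ι ι ℂ) :
    vec A ∈ fixedVectors (kroneckerHom (contragredient t) t) ↔ ∀ g, t g * A = A * t g := by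
  refine forall_congr' fun g ↦ ?_
  have hinv : t g⁻¹ * t g = 1 := by rw [← map_mul, inv_mul_cancel, map_one]
  have hinv' : t g * t g⁻¹ = 1 := by rw [← map_mul, mul_inv_cancel, map_one]
  simp only [kroneckerHom_apply, contragredient_apply, kronecker_mulVec_vec,
    transpose_transpose, vec_inj]
  constructor <;> intro h
  · rw [← congrArg (· * t g) h, Matrix.mul_assoc (t g * A), hinv, Matrix.mul_one]
  · rw [h, Matrix.mul_assoc, hinv', Matrix.mul_one]

lemma finrank_fixedVectors_kroneckerHom_contragredient [Nonempty ι] {t : G →* Matrix ι ι ℂ}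
    (hirred : ∀ A : Matrix ι ι ℂ, (∀ g, t g * A = A * t g) → ∃ c : ℂ, A = c • 1) :
    Module.finrank ℂ (fixedVectors (kroneckerHom (contragredient t) t)) = 1 := by
  have hspan : fixedVectors (kroneckerHom (contragredient t) t) =
      ℂ ∙ vec (1 : Matrix ι ι ℂ) := by
    ext v
    obtain ⟨A, rfl⟩ := vec_bijective.surjective v
    rw [vec_mem_fixedVectors_kroneckerHom_contragredient, Submodule.mem_span_singleton]
    constructor
    · intro hA
      obtain ⟨c, rfl⟩ := hirred A hA
      exact ⟨c, (vec_smul c 1).symm⟩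
    · rintro ⟨c, hc⟩ g
      rw [← vec_smul, vec_inj] at hc
      simp [← hc]
  rw [hspan, finrank_span_singleton]
  simp [← vec_zero, vec_inj]

lemma continuous_kroneckerHom [TopologicalSpace G] {s : G →* Matrix κ κ ℂ} {t : G →* Matrix ι ι ℂ}
    (hs : Continuous s) (ht : Continuous t) : Continuous (kroneckerHom s t) :=
  continuous_matrix fun i j ↦ (hs.matrix_elem i.1 j.1).mul (ht.matrix_elem i.2 j.2)

lemma continuous_contragredient [TopologicalSpace G] [ContinuousInv G] {t : G →* Matrix ι ι ℂ}
    (ht : Continuous t) : Continuous (contragredient t) :=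
  (ht.comp continuous_inv).matrix_transpose

variable [TopologicalSpace G] [IsTopologicalGroup G] [CompactSpace G] [MeasurableSpace G]
  [BorelSpace G] (μ : Measure G)

lemma isProj_integral_fixedVectors [IsProbabilityMeasure μ] [μ.IsMulLeftInvariant]
    {t : G →* Matrix ι ι ℂ} (ht : Continuous t) :
    LinearMap.IsProj (fixedVectors t) (toLin' (∫ g, t g ∂μ)) where
  map_mem v h := by
    have hinvariant : t h * ∫ g, t g ∂μ = ∫ g, t g ∂μ := by
      rw [← integral_const_mul_of_integrable (integrable_of_continuous ht)]
      simp_rw [← map_mul]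
      exact integral_mul_left_eq_self t h
    rw [toLin'_apply, mulVec_mulVec, hinvariant]
  map_id v hv := by
    let evalAt : Matrix ι ι ℂ →L[ℂ] ι → ℂ := ((mulVecBilin ℂ ℂ).flip v).toContinuousLinearMap
    calc (∫ g, t g ∂μ) *ᵥ v = ∫ g, t g *ᵥ v ∂μ :=
          (evalAt.integral_comp_comm (integrable_of_continuous ht)).symm
      _ = v := by simp [hv _]

theorem integral_trace_eq_finrank_fixedVectors [IsProbabilityMeasure μ] [μ.IsMulLeftInvariant]
    {t : G →* Matrix ι ι ℂ} (ht : Continuous t) :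
    ∫ g, (t g).trace ∂μ = Module.finrank ℂ (fixedVectors t) := by
  rw [← (isProj_integral_fixedVectors μ ht).trace, trace_toLin'_eq]
  exact (traceLinearMap ι ℂ ℂ).toContinuousLinearMap.integral_comp_comm
    (integrable_of_continuous ht)

theorem integral_trace_inv_mul_trace [Nonempty ι] [IsProbabilityMeasure μ] [μ.IsMulLeftInvariant]
    {t : G →* Matrix ι ι ℂ} (ht : Continuous t)
    (hirred : ∀ A : Matrix ι ι ℂ, (∀ g, t g * A = A * t g) → ∃ c : ℂ, A = c • 1) :
    ∫ g, (t g⁻¹).trace * (t g).trace ∂μ = 1 := by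
  have := integral_trace_eq_finrank_fixedVectors μ
    (continuous_kroneckerHom (continuous_contragredient ht) ht)
  simpa [trace_kronecker, finrank_fixedVectors_kroneckerHom_contragredient hirred] using this

end Representation

lemma eq_zero_of_integral_sq_eq_zero {X : Type*} [TopologicalSpace X] [CompactSpace X]
    [MeasurableSpace X] [OpensMeasurableSpace X] {μ : Measure X} [IsFiniteMeasure μ]
    [μ.IsOpenPosMeasure] {f : X → ℝ} (hf : Continuous f) (hint : ∫ x, f x ^ 2 ∂μ = 0) : f = 0 := by
  have hae : (fun x ↦ f x ^ 2) =ᵐ[μ] fun _ ↦ 0 :=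
    (integral_eq_zero_iff_of_nonneg (fun x ↦ sq_nonneg _)
      (integrable_of_continuous (hf.pow 2))).1 hint
  have hsq := (Continuous.ae_eq_iff_eq μ (hf.pow 2) continuous_const).1 hae
  exact funext fun x ↦ pow_eq_zero_iff two_ne_zero |>.1 (congrFun hsq x)

theorem comp_eq_zero_of_forall_integral_mul_eval_eq_zero {X : Type*} [TopologicalSpace X]
    [CompactSpace X] [MeasurableSpace X] [OpensMeasurableSpace X] {μ : Measure X}
    [IsFiniteMeasure μ] [μ.IsOpenPosMeasure] {φ : ℝ → ℝ} {g : X → ℝ} (hφ : Continuous φ)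
    (hg : Continuous g) (horth : ∀ p : ℝ[X], ∫ x, φ (g x) * p.eval (g x) ∂μ = 0) :
    φ ∘ g = 0 := by
  obtain ⟨C, hC⟩ := isCompact_univ.exists_bound_of_continuousOn hg.continuousOn
  refine eq_zero_of_integral_sq_eq_zero (μ := μ) (hφ.comp hg)
    ((integral_nonneg fun x ↦ sq_nonneg _).antisymm' (le_of_forall_pos_le_add fun ε hε ↦ ?_))
  set M := ∫ x, |φ (g x)| ∂μ with hM
  have hM_nonneg : 0 ≤ M := integral_nonneg fun x ↦ abs_nonneg _
  obtain ⟨p, hp⟩ := exists_polynomial_near_of_continuousOn (-C) C φ hφ.continuousOn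
    (ε / (M + 1)) (by positivity)
  calc ∫ x, φ (g x) ^ 2 ∂μ
      = ∫ x, φ (g x) ^ 2 ∂μ - ∫ x, φ (g x) * p.eval (g x) ∂μ := by rw [horth, sub_zero]
    _ = ∫ x, (φ (g x) ^ 2 - φ (g x) * p.eval (g x)) ∂μ :=
      (integral_sub (integrable_of_continuous (by fun_prop))
        (integrable_of_continuous (by fun_prop))).symm
    _ ≤ ∫ x, ε / (M + 1) * |φ (g x)| ∂μ := by
      refine integral_mono (integrable_of_continuous (by fun_prop))
        (integrable_of_continuous (by fun_prop)) fun x ↦ ?_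
      have hx := (hp (g x) (abs_le.1 (hC x (Set.mem_univ x)))).le
      calc φ (g x) ^ 2 - φ (g x) * p.eval (g x) ≤ |φ (g x) * (φ (g x) - p.eval (g x))| := by
            rw [sq, ← mul_sub]
            exact le_abs_self _
        _ ≤ ε / (M + 1) * |φ (g x)| := by
            rw [abs_mul, mul_comm, abs_sub_comm]
            gcongr
    _ = ε * (M / (M + 1)) := by rw [integral_const_mul, ← hM]; ring
    _ ≤ 0 + ε := by
      rw [zero_add]
      exact mul_le_of_le_one_right hε.le (div_le_one_of_le₀ (by linarith) (by linarith))

theorem eq_or_eq_neg_of_integral_mul_eq_intCast {X : Type*} [TopologicalSpace X]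
    [CompactSpace X] [MeasurableSpace X] [OpensMeasurableSpace X] {μ : Measure X}
    [IsFiniteMeasure μ] [μ.IsOpenPosMeasure] {f g : X → ℝ} (hf : Continuous f)
    (hg : Continuous g) (hf1 : ∫ x, f x ^ 2 ∂μ = 1) (hg1 : ∫ x, g x ^ 2 ∂μ = 1) {a : ℤ}
    (ha : a ≠ 0) (hfg : ∫ x, f x * g x ∂μ = a) : f = g ∨ f = -g := by
  have hdist : ∫ x, (f x - a * g x) ^ 2 ∂μ = 1 - (a : ℝ) ^ 2 := by
    have hexpand (x : X) : (f x - a * g x) ^ 2 =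
        f x ^ 2 - 2 * a * (f x * g x) + a ^ 2 * g x ^ 2 := by ring
    simp_rw [hexpand]
    rw [integral_add (integrable_of_continuous (by fun_prop))
        (integrable_of_continuous (by fun_prop)),
      integral_sub (integrable_of_continuous (by fun_prop))
        (integrable_of_continuous (by fun_prop)),
      integral_const_mul, integral_const_mul, hf1, hg1, hfg]
    ring
  have ha_sq : a ^ 2 = 1 := by
    have hnonneg : 0 ≤ 1 - (a : ℝ) ^ 2 := hdist ▸ integral_nonneg fun x ↦ sq_nonneg _
    have hle : a ^ 2 ≤ 1 := by exact_mod_cast sub_nonneg.1 hnonneg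
    have : 0 < a ^ 2 := by positivity
    omega
  have hfga : f = fun x ↦ a * g x := by
    have hzero := eq_zero_of_integral_sq_eq_zero (μ := μ) (f := fun x ↦ f x - a * g x) (by fun_prop)
      (by rw [hdist]; exact_mod_cast sub_eq_zero.2 ha_sq.symm)
    exact funext fun x ↦ sub_eq_zero.1 (congrFun hzero x)
  rw [hfga]
  rcases sq_eq_one_iff.1 ha_sq with rfl | rfl
  · left; ext x; simp
  · right; ext x; simp

lemma linearMap_eq_zero_of_forall_chebyshev_U {M : Type*} [AddCommGroup M] [Module ℝ M]
    (L : ℝ[X] →ₗ[ℝ] M)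
    (hL : ∀ k : ℕ, L (Chebyshev.U ℝ k) = 0) : L = 0 := by
  let S : Polynomial.Sequence ℝ := ⟨fun k ↦ Chebyshev.U ℝ k, Chebyshev.degree_U_natCast ℝ⟩
  refine (S.basis fun k ↦ ?_).ext fun k ↦ ?_
  · exact (leadingCoeff_ne_zero.2 (Chebyshev.U_ne_zero ℝ k (by omega))).isUnit
  · simpa [S] using hL k

theorem comp_eq_zero_of_forall_integral_mul_eval_U_eq_zero {X : Type*} [TopologicalSpace X]
    [CompactSpace X] [MeasurableSpace X] [OpensMeasurableSpace X] {μ : Measure X}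
    [IsFiniteMeasure μ] [μ.IsOpenPosMeasure] {φ : ℝ → ℝ} {g : X → ℝ} (hφ : Continuous φ)
    (hg : Continuous g)
    (horth : ∀ k : ℕ, ∫ x, φ (g x) * (Chebyshev.U ℝ k).eval (g x) ∂μ = 0) : φ ∘ g = 0 := by
  let pairing : ℝ[X] →ₗ[ℝ] ℝ :=
    { toFun p := ∫ x, φ (g x) * p.eval (g x) ∂μ
      map_add' p q := by
        simp only [eval_add, mul_add]
        exact integral_add (integrable_of_continuous (by fun_prop))
          (integrable_of_continuous (by fun_prop))
      map_smul' c p := by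
        simp only [eval_smul, smul_eq_mul, mul_left_comm _ c, integral_const_mul,
          RingHom.id_apply] }
  have hpairing : pairing = 0 := linearMap_eq_zero_of_forall_chebyshev_U pairing horth
  exact comp_eq_zero_of_forall_integral_mul_eval_eq_zero hφ hg (LinearMap.congr_fun hpairing)

lemma chebyshev_U_add (R : Type*) [CommRing R] (m n : ℤ) :
    Chebyshev.U R (m + n) =
      Chebyshev.U R m * Chebyshev.U R n - Chebyshev.U R (m - 1) * Chebyshev.U R (n - 1) := by
  induction n using Chebyshev.induct with
  | zero => simp
  | one =>
    have hm := Chebyshev.U_add_one R m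
    simp only [sub_self, Chebyshev.U_zero, Chebyshev.U_one]
    linear_combination hm
  | add_two n ih₁ ih₀ =>
    have hm := Chebyshev.U_add_two R (m + n)
    have hn := Chebyshev.U_add_two R n
    have hn' := Chebyshev.U_add_two R (n - 1)
    linear_combination (norm := ring_nf) hm + 2 * X * ih₁ - ih₀ - Chebyshev.U R m * hn +
      Chebyshev.U R (m - 1) * hn'
  | neg_add_one n ih₀ ih₁ =>
    have hm := Chebyshev.U_sub_one R (m - n)
    have hn := Chebyshev.U_sub_one R (-n)
    have hn' := Chebyshev.U_sub_one R (-n - 1)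
    linear_combination (norm := ring_nf) hm + 2 * X * ih₀ - ih₁ - Chebyshev.U R m * hn +
      Chebyshev.U R (m - 1) * hn'

lemma chebyshev_U_sq_eq_sum (R : Type*) [CommRing R] (k : ℕ) :
    Chebyshev.U R k ^ 2 = ∑ i ∈ Finset.range (k + 1), Chebyshev.U R (2 * i : ℕ) := by
  induction k with
  | zero => simp
  | succ k ih =>
    have hadd := chebyshev_U_add R (k + 1) (k + 1)
    rw [Finset.sum_range_succ, ← ih]
    push_cast
    linear_combination (norm := ring_nf) -hadd

theorem integral_flow_derivative_eq_zero {G E : Type*} [Group G] [TopologicalSpace G]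
    [IsTopologicalGroup G] [CompactSpace G] [MeasurableSpace G] [BorelSpace G] (μ : Measure G)
    [IsFiniteMeasure μ] [μ.IsMulLeftInvariant] [NormedAddCommGroup E] [NormedSpace ℝ E]
    {γ : ℝ → G} {f f' : G → E} (hγ : γ 0 = 1) (hf : Continuous f) (hf' : Continuous f')
    (hderiv : ∀ s x, HasDerivAt (fun s ↦ f (γ s * x)) (f' (γ s * x)) s) :
    ∫ x, f' x ∂μ = 0 := by
  obtain ⟨C, hC⟩ := isCompact_univ.exists_bound_of_continuousOn hf'.continuousOn
  have htranslate (h : G → E) (hh : Continuous h) (s : ℝ) : Continuous fun x ↦ h (γ s * x) :=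
    hh.comp (continuous_const_mul _)
  have hdiff : HasDerivAt (fun s ↦ ∫ x, f (γ s * x) ∂μ) (∫ x, f' (γ 0 * x) ∂μ) 0 :=
    (hasDerivAt_integral_of_dominated_loc_of_deriv_le (s := Set.univ) (bound := fun _ ↦ C)
      Filter.univ_mem
      (.of_forall fun s ↦ (integrable_of_continuous (htranslate f hf s)).aestronglyMeasurable)
      (integrable_of_continuous (htranslate f hf 0))
      (integrable_of_continuous (htranslate f' hf' 0)).aestronglyMeasurable
      (.of_forall fun x s _ ↦ hC _ (Set.mem_univ _)) (integrable_const C)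
      (.of_forall fun x s _ ↦ hderiv s x)).2
  simp only [integral_mul_left_eq_self f, hγ, one_mul] at hdiff
  exact hdiff.unique (hasDerivAt_const _ _)

namespace unitQuaternions

open Quaternion

lemma sum_sq_coords (x : unitQuaternions) :
    (x : ℍ[ℝ]).re ^ 2 + (x : ℍ[ℝ]).imI ^ 2 + (x : ℍ[ℝ]).imJ ^ 2 + (x : ℍ[ℝ]).imK ^ 2 = 1 := by
  rw [← Quaternion.normSq_def', Quaternion.normSq_eq_norm_mul_self, norm_eq_of_mem_sphere, one_mul]

lemma continuous_re_mul (u : ℍ[ℝ]) : Continuous fun x : unitQuaternions ↦ (u * x).re :=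
  Quaternion.continuous_re.comp (by fun_prop)

lemma continuous_re : Continuous fun x : unitQuaternions ↦ (x : ℍ[ℝ]).re := by
  simpa using continuous_re_mul 1

/-- The imaginary units `i`, `j`, `k` of `ℍ`, numbered `0`, `1`, `2`; they generate the flows along
which Haar integrals are differentiated. -/
@[simps]
def imUnit (l : Fin 3) : ℍ[ℝ] :=
  ⟨0, if l = 0 then 1 else 0, if l = 1 then 1 else 0, if l = 2 then 1 else 0⟩

lemma normSq_imUnit (l : Fin 3) : normSq (imUnit l) = 1 := by
  fin_cases l <;> simp [Quaternion.normSq_def']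

lemma norm_imUnit (l : Fin 3) : ‖imUnit l‖ = 1 := by
  rw [← sq_eq_sq₀ (norm_nonneg _) zero_le_one, sq, ← Quaternion.normSq_eq_norm_mul_self,
    normSq_imUnit, one_pow]

/-- The one-parameter subgroup `s ↦ exp (s u)` of `S³` generated by a pure quaternion `u`. -/
def oneParameter (u : ℍ[ℝ]) (hu : u.re = 0) (s : ℝ) : unitQuaternions :=
  ⟨NormedSpace.exp (s • u), by simp [Quaternion.norm_exp, hu]⟩

lemma hasDerivAt_re_mul_oneParameter_mul {u : ℍ[ℝ]} (hu : u.re = 0) (v : ℍ[ℝ]) (s : ℝ)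
    (x : unitQuaternions) :
    HasDerivAt (fun s ↦ (v * (oneParameter u hu s * x : unitQuaternions)).re)
      (v * (u * (oneParameter u hu s * x : unitQuaternions))).re s := by
  let reL : ℍ[ℝ] →L[ℝ] ℝ := ⟨QuaternionAlgebra.reₗ _ _ _, Quaternion.continuous_re⟩
  have hexp := ((hasDerivAt_exp_smul_const' u s).mul_const (x : ℍ[ℝ])).const_mul v
  rw [mul_assoc u] at hexp
  exact reL.hasFDerivAt.comp_hasDerivAt s hexp

section Integral

variable [MeasurableSpace unitQuaternions] [BorelSpace unitQuaternions]
  (μ : Measure unitQuaternions) [μ.IsMulLeftInvariant]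

lemma integral_derivative_eval_re_mul_sq [IsFiniteMeasure μ] (p : ℝ[X]) {u : ℍ[ℝ]} (hu : u.re = 0) :
    ∫ x : unitQuaternions, p.derivative.eval (x : ℍ[ℝ]).re * (u * x).re ^ 2 ∂μ =
      normSq u * ∫ x : unitQuaternions, (x : ℍ[ℝ]).re * p.eval (x : ℍ[ℝ]).re ∂μ := by
  have hre := continuous_re
  have hmul := continuous_re_mul u
  have hsq (x : ℍ[ℝ]) : (u * (u * x)).re = -(normSq u * x.re) := by
    rw [← mul_assoc, ← sq, Quaternion.sq_eq_neg_normSq.2 hu]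
    simp
  have hflow : ∫ x : unitQuaternions, (p.derivative.eval (x : ℍ[ℝ]).re * (u * x).re ^ 2 -
      normSq u * ((x : ℍ[ℝ]).re * p.eval (x : ℍ[ℝ]).re)) ∂μ = 0 := by
    refine integral_flow_derivative_eq_zero μ (γ := oneParameter u hu)
      (f := fun x ↦ p.eval (x : ℍ[ℝ]).re * (u * x).re)
      (Subtype.ext (by simp [oneParameter])) (by fun_prop) (by fun_prop) fun s x ↦ ?_
    have hre' := hasDerivAt_re_mul_oneParameter_mul hu 1 s x
    simp only [one_mul] at hre'
    have := ((p.hasDerivAt _).comp s hre').mul (hasDerivAt_re_mul_oneParameter_mul hu u s x)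
    refine this.congr_deriv ?_
    rw [hsq, Function.comp_apply]
    ring
  rwa [integral_sub (integrable_of_continuous (by fun_prop))
    (integrable_of_continuous (by fun_prop)), integral_const_mul, sub_eq_zero] at hflow

lemma integral_one_sub_sq_mul_derivative_eval_re [IsFiniteMeasure μ] (p : ℝ[X]) :
    ∫ x : unitQuaternions, (1 - (x : ℍ[ℝ]).re ^ 2) * p.derivative.eval (x : ℍ[ℝ]).re ∂μ =
      3 * ∫ x : unitQuaternions, (x : ℍ[ℝ]).re * p.eval (x : ℍ[ℝ]).re ∂μ := by
  have hre := continuous_re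
  have hsum (x : unitQuaternions) : ∑ l, (imUnit l * x).re ^ 2 = 1 - (x : ℍ[ℝ]).re ^ 2 := by
    have hcoords : ∑ l, (imUnit l * x).re ^ 2 =
        (x : ℍ[ℝ]).imI ^ 2 + (x : ℍ[ℝ]).imJ ^ 2 + (x : ℍ[ℝ]).imK ^ 2 := by
      simp [Fin.sum_univ_three]
    linarith [sum_sq_coords x]
  simp_rw [← hsum, Finset.sum_mul, mul_comm _ (p.derivative.eval _)]
  rw [integral_finsetSum _ fun l _ ↦ integrable_of_continuous ?_]
  · simp_rw [integral_derivative_eval_re_mul_sq μ p (re_imUnit _), normSq_imUnit]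
    simp
  · have := continuous_re_mul (imUnit l)
    fun_prop

lemma integral_eval_re_U_eq_zero [IsFiniteMeasure μ] {k : ℕ} (hk : k ≠ 0) :
    ∫ x : unitQuaternions, (Chebyshev.U ℝ k).eval (x : ℍ[ℝ]).re ∂μ = 0 := by
  have hre := continuous_re
  have hode (r : ℝ) : (k + 2) * k * (Chebyshev.U ℝ k).eval r =
      3 * (r * (Chebyshev.U ℝ k).derivative.eval r) -
        (1 - r ^ 2) * (Chebyshev.U ℝ k).derivative.derivative.eval r := by
    have := congrArg (eval r)
      (Chebyshev.one_sub_X_sq_mul_derivative_derivative_U_eq_poly_in_U (R := ℝ) k)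
    simp only [Function.iterate_succ, Function.iterate_zero, Function.comp_apply, id_eq, eval_mul,
      eval_sub, eval_add, eval_pow, eval_one, eval_X, eval_ofNat, Int.cast_natCast,
      eval_natCast] at this
    linarith
  have := integral_one_sub_sq_mul_derivative_eval_re μ (Chebyshev.U ℝ k).derivative
  have hzero :
      (k + 2) * k * ∫ x : unitQuaternions, (Chebyshev.U ℝ k).eval (x : ℍ[ℝ]).re ∂μ = 0 := by
    rw [← integral_const_mul]
    simp_rw [hode]
    rw [integral_sub (integrable_of_continuous (by fun_prop))
      (integrable_of_continuous (by fun_prop)), integral_const_mul, this, sub_self]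
  exact (mul_eq_zero.1 hzero).resolve_left (by positivity)

lemma integral_eval_re_U_sq [IsProbabilityMeasure μ] (k : ℕ) :
    ∫ x : unitQuaternions, (Chebyshev.U ℝ k).eval (x : ℍ[ℝ]).re ^ 2 ∂μ = 1 := by
  have hre := continuous_re
  simp_rw [← eval_pow, chebyshev_U_sq_eq_sum ℝ, eval_finsetSum]
  rw [integral_finsetSum _ fun i _ ↦ integrable_of_continuous (by fun_prop), Finset.sum_eq_single 0]
  · simp
  · exact fun i _ hi ↦ integral_eval_re_U_eq_zero μ (mul_ne_zero two_ne_zero hi)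
  · simp

end Integral

lemma continuous_oneParameter {u : ℍ[ℝ]} (hu : u.re = 0) : Continuous (oneParameter u hu) :=
  (continuous_iff_continuousAt.2 fun s ↦ (hasDerivAt_exp_smul_const u s).continuousAt).subtype_mk _

lemma re_oneParameter {u : ℍ[ℝ]} (hu : u.re = 0) (hnorm : ‖u‖ = 1) (s : ℝ) :
    (oneParameter u hu s : ℍ[ℝ]).re = Real.cos s := by
  simp [oneParameter, Quaternion.re_exp, hu, norm_smul, hnorm]

lemma exists_ne_zero_mul_eq_mul_of_re_eq {x y : ℍ[ℝ]} (hre : x.re = y.re)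
    (hnorm : normSq x = normSq y) : ∃ z : ℍ[ℝ], z ≠ 0 ∧ z * x = y * z := by
  by_cases h : ∀ w : ℍ[ℝ], y * w = w * star x
  · have hy : y = star x := by simpa using h 1
    rw [hy] at h
    have himI : x.imI = 0 := by
      simpa [neg_eq_self, self_eq_neg] using congrArg QuaternionAlgebra.imK (h (imUnit 1))
    have himJ : x.imJ = 0 := by
      simpa [neg_eq_self, self_eq_neg] using congrArg QuaternionAlgebra.imK (h (imUnit 0))
    have himK : x.imK = 0 := by
      simpa [neg_eq_self, self_eq_neg] using congrArg QuaternionAlgebra.imJ (h (imUnit 0))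
    refine ⟨1, one_ne_zero, ?_⟩
    rw [one_mul, mul_one, hy]
    ext <;> simp [himI, himJ, himK]
  · push Not at h
    obtain ⟨w, hw⟩ := h
    have hstar : star x = (2 * y.re) • 1 - x := by
      rw [eq_sub_iff_add_eq, star_add_self', hre]
      ext <;> simp
    have hy : y * y = (2 * y.re) • y - normSq y • 1 := by
      rw [eq_sub_iff_add_eq, ← Algebra.algebraMap_eq_smul_one, Quaternion.algebraMap_def,
        ← star_mul_self, ← add_mul, self_add_star', coe_mul_eq_smul]
    have hx : star x * x = normSq y • 1 := by
      rw [star_mul_self, hnorm, ← Algebra.algebraMap_eq_smul_one, Quaternion.algebraMap_def]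
    -- As `x` and `y` are both roots of `X² - 2 re y X + normSq y`, the element `y w - w x̄`
    -- intertwines them for every `w`.
    refine ⟨y * w - w * star x, sub_ne_zero.2 hw, ?_⟩
    calc (y * w - w * star x) * x = y * w * x - normSq y • w := by
          rw [sub_mul, mul_assoc w, hx, mul_smul_comm, mul_one]
      _ = y * y * w - y * w * star x := by
          rw [hy, hstar]
          simp only [sub_mul, mul_sub, smul_mul_assoc, mul_smul_comm, one_mul, mul_one]
          abel
      _ = y * (y * w - w * star x) := by simp only [mul_sub, mul_assoc]

lemma isConj_of_re_eq {x y : unitQuaternions} (h : (x : ℍ[ℝ]).re = (y : ℍ[ℝ]).re) : IsConj x y := by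
  obtain ⟨z, hz, hconj⟩ := exists_ne_zero_mul_eq_mul_of_re_eq h
    (by simp [Quaternion.normSq_eq_norm_mul_self])
  let u : unitQuaternions := ⟨‖z‖⁻¹ • z, by simp [norm_smul, hz]⟩
  have hu : u * x = y * u := by
    ext1
    simp [u, hconj]
  exact isConj_iff.2 ⟨u, by rw [hu, mul_inv_cancel_right]⟩

lemma re_inv (x : unitQuaternions) : ((x⁻¹ : unitQuaternions) : ℍ[ℝ]).re = (x : ℍ[ℝ]).re := by
  simp [Quaternion.inv_def, Quaternion.normSq_eq_norm_mul_self]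

lemma abs_re_le_one (x : unitQuaternions) : |(x : ℍ[ℝ]).re| ≤ 1 := by
  rw [← sq_le_one_iff_abs_le_one]
  have := sum_sq_coords x
  nlinarith [sq_nonneg (x : ℍ[ℝ]).imI, sq_nonneg (x : ℍ[ℝ]).imJ, sq_nonneg (x : ℍ[ℝ]).imK]

theorem exists_continuous_eq_comp_re {E : Type*} [TopologicalSpace E] {f : unitQuaternions → E}
    (hf : Continuous f) (hconj : ∀ x y, IsConj x y → f x = f y) :
    ∃ φ : ℝ → E, Continuous φ ∧ ∀ x : unitQuaternions, f x = φ (x : ℍ[ℝ]).re := by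
  refine ⟨fun c ↦ f (oneParameter (imUnit 0) (re_imUnit 0) (Real.arccos c)),
    hf.comp ((continuous_oneParameter _).comp Real.continuous_arccos), fun x ↦
    hconj _ _ (isConj_of_re_eq ?_)⟩
  have hre := abs_le.1 (abs_re_le_one x)
  rw [re_oneParameter _ (norm_imUnit 0), Real.cos_arccos hre.1 hre.2]

/-- The spin representation of `S³`: for `x = z + w j` in `ℍ = ℂ ⊕ ℂ j`, the rows of
`spin x = !![z, w; -w̄, z̄]` are the coordinates of `x` and `j x`. -/
def spin : unitQuaternions →* Matrix (Fin 2) (Fin 2) ℂ where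
  toFun x := !![⟨(x : ℍ[ℝ]).re, (x : ℍ[ℝ]).imI⟩, ⟨(x : ℍ[ℝ]).imJ, (x : ℍ[ℝ]).imK⟩;
    ⟨-(x : ℍ[ℝ]).imJ, (x : ℍ[ℝ]).imK⟩, ⟨(x : ℍ[ℝ]).re, -(x : ℍ[ℝ]).imI⟩]
  map_one' := by
    ext i j
    fin_cases i <;> fin_cases j <;> simp [Complex.ext_iff]
  map_mul' x y := by
    ext i j
    fin_cases i <;> fin_cases j <;> simp [Complex.ext_iff, Matrix.mul_apply, Fin.sum_univ_two] <;>
      constructor <;> ring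

lemma trace_spin (x : unitQuaternions) : (spin x).trace = 2 * (x : ℍ[ℝ]).re := by
  simp [spin, trace_fin_two, Complex.ext_iff, two_mul]

lemma continuous_spin : Continuous spin := by
  have hentry {a b : ℍ[ℝ] → ℝ} (ha : Continuous a) (hb : Continuous b) :
      Continuous fun x : unitQuaternions ↦ (⟨a x, b x⟩ : ℂ) :=
    Complex.equivRealProdCLM.symm.continuous.comp
      ((ha.comp continuous_subtype_val).prodMk (hb.comp continuous_subtype_val))
  refine continuous_matrix fun i j ↦ ?_
  fin_cases i <;> fin_cases j
  · exact hentry Quaternion.continuous_re Quaternion.continuous_imI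
  · exact hentry Quaternion.continuous_imJ Quaternion.continuous_imK
  · exact hentry Quaternion.continuous_imJ.neg Quaternion.continuous_imK
  · exact hentry Quaternion.continuous_re Quaternion.continuous_imI.neg

section Character

variable {ι : Type*} [Fintype ι] [DecidableEq ι] {t : unitQuaternions →* Matrix ι ι ℂ}

theorem exists_integral_trace_mul_eval_U_eq_intCast [MeasurableSpace unitQuaternions]
    [BorelSpace unitQuaternions] (μ : Measure unitQuaternions) [IsProbabilityMeasure μ]
    [μ.IsMulLeftInvariant] (ht : Continuous t) (k : ℕ) :
    ∃ m : ℤ, ∫ x, (t x).trace * ((Chebyshev.U ℝ k).eval (x : ℍ[ℝ]).re : ℝ) ∂μ = m := by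
  induction k using Nat.twoStepInduction generalizing ι with
  | zero =>
    have hint := integral_trace_eq_finrank_fixedVectors μ ht
    exact ⟨Module.finrank ℂ (fixedVectors t), by simpa using hint⟩
  | one =>
    have hint := integral_trace_eq_finrank_fixedVectors μ
      (continuous_kroneckerHom continuous_spin ht)
    refine ⟨Module.finrank ℂ (fixedVectors (kroneckerHom spin t)), ?_⟩
    simpa [trace_kronecker, trace_spin, mul_comm] using hint
  | more k ih₀ ih₁ =>
    obtain ⟨a, ha⟩ := ih₀ ht
    obtain ⟨b, hb⟩ := ih₁ (continuous_kroneckerHom continuous_spin ht)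
    have hre := continuous_re
    refine ⟨b - a, ?_⟩
    rw [Int.cast_sub, ← ha, ← hb, ← integral_sub (integrable_of_continuous ?_)
      (integrable_of_continuous (by fun_prop))]
    · congr 1 with x
      rw [kroneckerHom_apply, trace_kronecker, trace_spin]
      push_cast [Chebyshev.U_add_two, eval_sub, eval_mul, eval_ofNat, eval_X]
      ring
    · exact (continuous_kroneckerHom continuous_spin ht).matrix_trace.mul (by fun_prop)

lemma ofReal_re_trace (ht : Continuous t) (x : unitQuaternions) :
    ((t x).trace.re : ℂ) = (t x).trace := by
  borelize (unitQuaternions : Type)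
  obtain ⟨μ, _, _⟩ := exists_isProbabilityMeasure_isHaarMeasure unitQuaternions
  obtain ⟨φ, hφ, hφ_re⟩ := exists_continuous_eq_comp_re (f := fun x ↦ (t x).trace.im)
    (Complex.continuous_im.comp ht.matrix_trace)
    fun x y hxy ↦ congrArg Complex.im (trace_eq_of_isConj t hxy)
  have him : φ ∘ (fun x : unitQuaternions ↦ (x : ℍ[ℝ]).re) = 0 := by
    refine comp_eq_zero_of_forall_integral_mul_eval_U_eq_zero (μ := μ) hφ continuous_re fun k ↦ ?_
    have hre := continuous_re
    obtain ⟨m, hm⟩ := exists_integral_trace_mul_eval_U_eq_intCast μ ht k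
    have hcomm := Complex.imCLM.integral_comp_comm (μ := μ) (φ := fun x ↦
      (t x).trace * ((Chebyshev.U ℝ k).eval (x : ℍ[ℝ]).re : ℝ))
      (integrable_of_continuous (by fun_prop))
    simpa only [Complex.imCLM_apply, Complex.im_mul_ofReal, hφ_re, hm, Complex.intCast_im]
      using hcomm
  exact Complex.ext rfl ((hφ_re x).trans (congrFun him x)).symm

lemma integral_re_trace_sq [Nonempty ι] [MeasurableSpace unitQuaternions]
    [BorelSpace unitQuaternions] (μ : Measure unitQuaternions) [IsProbabilityMeasure μ]
    [μ.IsMulLeftInvariant] (ht : Continuous t)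
    (hirred : ∀ A : Matrix ι ι ℂ, (∀ x, t x * A = A * t x) → ∃ c : ℂ, A = c • 1) :
    ∫ x, (t x).trace.re ^ 2 ∂μ = 1 := by
  have hinv (x : unitQuaternions) : (t x⁻¹).trace = (t x).trace :=
    trace_eq_of_isConj t (isConj_of_re_eq (re_inv x))
  have hint := integral_trace_inv_mul_trace μ ht hirred
  have hint_ofReal : ∫ x, (((t x).trace.re ^ 2 : ℝ) : ℂ) ∂μ = 1 := by
    simpa only [Complex.ofReal_pow, ofReal_re_trace ht, hinv, ← sq] using hint
  rw [integral_complex_ofReal] at hint_ofReal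
  exact_mod_cast hint_ofReal

theorem exists_integral_re_trace_mul_eval_U_eq_intCast_ne_zero [Nonempty ι]
    [MeasurableSpace unitQuaternions] [BorelSpace unitQuaternions] (μ : Measure unitQuaternions)
    [IsProbabilityMeasure μ] [μ.IsMulLeftInvariant] [μ.IsOpenPosMeasure] (ht : Continuous t)
    (hirred : ∀ A : Matrix ι ι ℂ, (∀ x, t x * A = A * t x) → ∃ c : ℂ, A = c • 1) :
    ∃ (k : ℕ) (m : ℤ), m ≠ 0 ∧
      ∫ x, (t x).trace.re * (Chebyshev.U ℝ k).eval (x : ℍ[ℝ]).re ∂μ = m := by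
  obtain ⟨φ, hφ, hφ_re⟩ := exists_continuous_eq_comp_re (f := fun x ↦ (t x).trace.re)
    (Complex.continuous_re.comp ht.matrix_trace)
    fun x y hxy ↦ congrArg Complex.re (trace_eq_of_isConj t hxy)
  obtain ⟨k, hk⟩ : ∃ k : ℕ,
      ∫ x, (t x).trace.re * (Chebyshev.U ℝ k).eval (x : ℍ[ℝ]).re ∂μ ≠ 0 := by
    by_contra! horth
    simp_rw [hφ_re] at horth
    have hzero := comp_eq_zero_of_forall_integral_mul_eval_U_eq_zero hφ continuous_re horth
    have hchar_zero (x) : (t x).trace.re = 0 := (hφ_re x).trans (congrFun hzero x)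
    simpa [hchar_zero] using integral_re_trace_sq μ ht hirred
  obtain ⟨m, hm⟩ := exists_integral_trace_mul_eval_U_eq_intCast μ ht k
  have hm_re : ∫ x, (t x).trace.re * (Chebyshev.U ℝ k).eval (x : ℍ[ℝ]).re ∂μ = m := by
    rw [← Complex.ofReal_inj, ← integral_complex_ofReal]
    simpa only [Complex.ofReal_mul, ofReal_re_trace ht, Complex.ofReal_intCast] using hm
  exact ⟨k, m, fun hm_zero ↦ hk (by rw [hm_re, hm_zero, Int.cast_zero]), hm_re⟩

theorem exists_trace_eq_eval_U [Nonempty ι] (ht : Continuous t)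
    (hirred : ∀ A : Matrix ι ι ℂ, (∀ x, t x * A = A * t x) → ∃ c : ℂ, A = c • 1) :
    ∃ k : ℕ, ∀ x, (t x).trace = ((Chebyshev.U ℝ k).eval (x : ℍ[ℝ]).re : ℝ) := by
  borelize (unitQuaternions : Type)
  obtain ⟨μ, _, _⟩ := exists_isProbabilityMeasure_isHaarMeasure unitQuaternions
  have hre := continuous_re
  obtain ⟨k, m, hm, hinner⟩ := exists_integral_re_trace_mul_eval_U_eq_intCast_ne_zero μ ht hirred
  refine ⟨k, fun x ↦ (ofReal_re_trace ht x).symm.trans (congrArg _ ?_)⟩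
  rcases eq_or_eq_neg_of_integral_mul_eq_intCast (Complex.continuous_re.comp ht.matrix_trace)
    (by fun_prop) (integral_re_trace_sq μ ht hirred) (integral_eval_re_U_sq μ k) hm hinner
    with hpos | hneg
  · exact congrFun hpos x
  · have hone : (Fintype.card ι : ℝ) = -(k + 1) := by simpa [neg_add] using congrFun hneg 1
    have : (0 : ℝ) < Fintype.card ι := by exact_mod_cast Fintype.card_pos
    linarith

theorem trace_eq_eval_U {n : ℕ} (hcard : Fintype.card ι = n + 1) (ht : Continuous t)
    (hirred : ∀ A : Matrix ι ι ℂ, (∀ x, t x * A = A * t x) → ∃ c : ℂ, A = c • 1)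
    (x : unitQuaternions) : (t x).trace = ((Chebyshev.U ℝ n).eval (x : ℍ[ℝ]).re : ℝ) := by
  have : Nonempty ι := Fintype.card_pos_iff.1 (hcard ▸ n.succ_pos)
  obtain ⟨k, hk⟩ := exists_trace_eq_eval_U ht hirred
  have hdim : (Fintype.card ι : ℂ) = k + 1 := by simpa using hk 1
  obtain rfl : n = k := by
    rw [hcard] at hdim
    exact Nat.succ_injective (by exact_mod_cast hdim)
  exact hk x

end Character

end unitQuaternions

lemma gegenbauer_one_eq_chebyshev_U (n : ℕ) : gegenbauer 1 n = Chebyshev.U ℝ n := by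
  induction n using Nat.twoStepInduction with
  | zero => simp [gegenbauer]
  | one => simp [gegenbauer, map_ofNat]
  | more n ih₀ ih₁ =>
    have hn : (n : ℝ) + 2 ≠ 0 := by positivity
    have hlead : 2 * ((n : ℝ) + 1 + 1) / (n + 2) = 2 := by field_simp; ring
    have htail : ((n : ℝ) + 2 * 1) / (n + 2) = 1 := by field_simp
    rw [gegenbauer, hlead, htail, ih₀, ih₁]
    push_cast
    rw [Chebyshev.U_add_two, map_one, one_mul]
    rfl

theorem character_unitQuaternions_general {ι : Type*} [Fintype ι] [DecidableEq ι] (n : ℕ)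
    (hcard : Fintype.card ι = n + 1) (t : unitQuaternions →* Matrix ι ι ℂ)
    (hcont : ∀ i j, Continuous fun x => t x i j)
    (hirred : ∀ A : Matrix ι ι ℂ, (∀ x, t x * A = A * t x) → ∃ c : ℂ, A = c • 1) :
    (∀ x : unitQuaternions, (t x).trace = (((gegenbauer 1 n).eval (x : Quaternion ℝ).re : ℝ) : ℂ)) ∧
      ∀ (x : unitQuaternions) (θ : ℝ), Real.sin θ ≠ 0 → (x : Quaternion ℝ).re = Real.cos θ →
        (t x).trace = ((Real.sin (((n : ℝ) + 1) * θ) / Real.sin θ : ℝ) : ℂ) := by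
  have htrace := unitQuaternions.trace_eq_eval_U hcard (continuous_matrix hcont) hirred
  refine ⟨fun x ↦ by rw [htrace, gegenbauer_one_eq_chebyshev_U], fun x θ hθ hx ↦ ?_⟩
  rw [htrace, hx, eq_div_of_mul_eq hθ (Chebyshev.U_real_cos θ n), Int.cast_natCast]

/-- The character of the `(n+1)`-dimensional irreducible unitary representation `t_n` of the
group `S³` of unit quaternions depends only on the scalar part:
`tr t_n(x) = C_n^1(Sc x)`, and `tr t_n(x) = sin((n+1)θ)/sin θ` whenever `Sc x = cos θ`. -/
theorem character_unitQuaternions (n : ℕ)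
    (t : unitQuaternions →* Matrix (Fin (n + 1)) (Fin (n + 1)) ℂ)
    (hcont : ∀ i j, Continuous fun x => t x i j)
    (hunitary : ∀ x, (t x)ᴴ * t x = 1)
    (hirred : ∀ A : Matrix (Fin (n + 1)) (Fin (n + 1)) ℂ,
      (∀ x, t x * A = A * t x) → ∃ c : ℂ, A = c • 1) :
    (∀ x : unitQuaternions, (t x).trace = (((gegenbauer 1 n).eval (x : Quaternion ℝ).re : ℝ) : ℂ)) ∧
      ∀ (x : unitQuaternions) (θ : ℝ), Real.sin θ ≠ 0 → (x : Quaternion ℝ).re = Real.cos θ →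
        (t x).trace = ((Real.sin (((n : ℝ) + 1) * θ) / Real.sin θ : ℝ) : ℂ) := by
  exact character_unitQuaternions_general n (Fintype.card_fin _) t hcont hirred

end
end
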